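/- arXiv:1601.00399 — 3 statements merged into one kernel-verified Lean document; each statement's English description precedes it below -/
import Mathlib

section
/- MRA decomposition (existence and uniqueness): For every A ⊆ [n] with |A| ≥ 2 and every F ∈ L(Γ(A)), there exists a unique family (X_B)_{B∈P̄(A)} with X_B ∈ H_B for each B ∈ P̄(A) such that F = Σ_{B∈P̄(A)} φ_A X_B. Equivalently, L(Γ(A)) decomposes as the direct sum ⊕_{B∈P̄(A)} φ_A(H_B). -/
open Finset
open scoped List

abbrev Word (n : ℕ) := List (Fin n)

/-- `Γ(A)`: duplicate-free words whose set of letters is exactly `A`. -/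
noncomputable def rankings (n : ℕ) (A : Finset (Fin n)) : Finset (Word n) :=
  A.toList.permutations.toFinset

/-- All duplicate-free words on `[n]`. -/
noncomputable def allWords (n : ℕ) : Finset (Word n) :=
  Finset.univ.biUnion fun A : Finset (Fin n) => rankings n A

def IsRanking {n : ℕ} (A : Finset (Fin n)) (w : Word n) : Prop :=
  w.Nodup ∧ w.toFinset = A

instance {n : ℕ} (A : Finset (Fin n)) (w : Word n) : Decidable (IsRanking A w) :=
  inferInstanceAs (Decidable (w.Nodup ∧ w.toFinset = A))

/-- Membership in `L(Γ(A))`: functions supported on `Γ(A)`. -/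
def MemL {n : ℕ} (A : Finset (Fin n)) (F : Word n → ℝ) : Prop :=
  ∀ w, F w ≠ 0 → IsRanking A w

/-- Marginal operator `M_B` (with the convention `M_∅ F = (Σ F)·δ_0̄`). -/
noncomputable def marg {n : ℕ} (B : Finset (Fin n)) (F : Word n → ℝ) : Word n → ℝ :=
  fun π => if IsRanking B π then ∑ σ ∈ allWords n, (if π <+ σ then F σ else 0) else 0

/-- Membership in the localization space `H_B` (for `B = ∅` this is `L(Γ(∅)) = ℝ·δ_0̄`). -/
def MemH {n : ℕ} (B : Finset (Fin n)) (F : Word n → ℝ) : Prop :=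
  MemL B F ∧
    (∀ B' : Finset (Fin n), B' ⊂ B → 2 ≤ B'.card → marg B' F = 0) ∧
    (2 ≤ B.card → ∑ π ∈ rankings n B, F π = 0)

/-- `P̄(A) = {B ⊆ A : |B| ≥ 2} ∪ {∅}`. -/
def Pbar {n : ℕ} (A : Finset (Fin n)) : Finset (Finset (Fin n)) :=
  A.powerset.filter fun B => 2 ≤ B.card ∨ B = ∅

/-- Synthesis operator `φ_A`. -/
noncomputable def synth {n : ℕ} (A : Finset (Fin n)) (F : Word n → ℝ) : Word n → ℝ :=
  fun σ =>
    if IsRanking A σ then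
      F [] / (Nat.factorial A.card : ℝ) +
        ∑ π ∈ allWords n,
          (if π ≠ [] ∧ π <:+: σ then F π / (Nat.factorial (A.card - π.length + 1) : ℝ) else 0)
    else 0

/-- Dirac function `δ_π`. -/
noncomputable def dirac {n : ℕ} (π : Word n) : Word n → ℝ :=
  fun w => if w = π then 1 else 0

/-- `σ|_C`: the induced word of `σ` on `C`. -/
def restrictWord {n : ℕ} (σ : Word n) (C : Finset (Fin n)) : Word n :=
  σ.filter fun a => decide (a ∈ C)

namespace MRA

/-- nonempty prefixes -/
def prefs {α : Type*} : List α → List (List α)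
  | [] => []
  | x :: s => [x] :: (prefs s).map (List.cons x)

/-- nonempty infixes -/
def infs {α : Type*} : List α → List (List α)
  | [] => []
  | x :: s => prefs (x :: s) ++ infs s

def PS {α : Type*} (F : List α → ℝ) (s : List α) : ℝ := ((prefs s).map F).sum
def IS {α : Type*} (F : List α → ℝ) (s : List α) : ℝ := ((infs s).map F).sum
def SS {α : Type*} (a : α) (F : List α → ℝ) (s : List α) : ℝ :=
  ((List.permutations'Aux a s).map F).sum

variable {α : Type*}

lemma PS_nil (F : List α → ℝ) : PS F [] = 0 := by simp [PS, prefs]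
lemma PS_cons (F : List α → ℝ) (x : α) (s : List α) :
    PS F (x :: s) = F [x] + PS (fun w => F (x :: w)) s := by
  simp [PS, prefs, Function.comp_def]
lemma IS_nil (F : List α → ℝ) : IS F [] = 0 := by simp [IS, infs]
lemma IS_cons (F : List α → ℝ) (x : α) (s : List α) :
    IS F (x :: s) = PS F (x :: s) + IS F s := by
  simp [IS, infs, PS]
lemma SS_nil (a : α) (F : List α → ℝ) : SS a F [] = F [a] := by simp [SS]
lemma SS_cons (a : α) (F : List α → ℝ) (x : α) (s : List α) :
    SS a F (x :: s) = F (a :: x :: s) + SS a (fun w => F (x :: w)) s := by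
  simp [SS, Function.comp_def]

lemma SS_add (a : α) (F G : List α → ℝ) (s : List α) :
    SS a (fun w => F w + G w) s = SS a F s + SS a G s := by
  simp [SS, List.sum_map_add]
lemma PS_add (F G : List α → ℝ) (s : List α) :
    PS (fun w => F w + G w) s = PS F s + PS G s := by
  simp [PS, List.sum_map_add]
lemma SS_const (a : α) (c : ℝ) (s : List α) : SS a (fun _ => c) s = (s.length + 1) * c := by
  simp [SS]
lemma SS_div (a : α) (F : List α → ℝ) (c : ℝ) (s : List α) :
    SS a (fun w => F w / c) s = SS a F s / c := by
  simp [SS, div_eq_mul_inv, List.sum_map_mul_right]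

lemma PS_zero (F : List α → ℝ) (hF : ∀ w, F w = 0) (s : List α) : PS F s = 0 := by
  have : F = fun _ => 0 := funext hF
  subst this; simp [PS]
lemma SS_zero (a : α) (F : List α → ℝ) (hF : ∀ w, F w = 0) (s : List α) : SS a F s = 0 := by
  have : F = fun _ => 0 := funext hF
  subst this; simp [SS]

/-- words all containing `a` -/
lemma PS_of_notMem (a : α) (F : List α → ℝ) (hF : ∀ w, a ∉ w → F w = 0) (s : List α) (hs : a ∉ s) :
    PS F s = 0 := by
  induction s generalizing F with
  | nil => simp [PS_nil]
  | cons x s ih =>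
    simp only [List.mem_cons, not_or] at hs
    rw [PS_cons, hF _ (by simp [hs.1]), ih _ (fun w hw => hF _ (by simp [hs.1, hw])) hs.2]; simp

lemma IS_of_notMem (a : α) (F : List α → ℝ) (hF : ∀ w, a ∉ w → F w = 0) (s : List α) (hs : a ∉ s) :
    IS F s = 0 := by
  induction s with
  | nil => simp [IS_nil]
  | cons x s ih =>
    rw [IS_cons, PS_of_notMem a F hF _ hs, ih (by simp_all)]; simp

lemma SS_PS_mem (a : α) (F : List α → ℝ) (hF : ∀ w, a ∉ w → F w = 0) (s : List α) (hs : a ∉ s) :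
    SS a (PS F) s = SS a F [] + PS (SS a F) s := by
  induction s generalizing F with
  | nil => simp [SS_nil, PS_nil, PS_cons]
  | cons x s ih =>
    simp only [List.mem_cons, not_or] at hs
    have h1 := ih (fun w => F (x :: w)) (fun w hw => hF _ (by simp [hs.1, hw])) hs.2
    have h0 : F [x] = 0 := hF _ (by simp [hs.1])
    simp only [SS_cons, PS_cons, h0, zero_add, SS_nil, h1, PS_add]
    ring

lemma SS_IS_mem (a : α) (F : List α → ℝ) (hF : ∀ w, a ∉ w → F w = 0)
    (hS : ∀ w, SS a F w = 0) (s : List α) (hs : a ∉ s) :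
    SS a (IS F) s = 0 := by
  have key : ∀ s, a ∉ s → SS a (PS F) s = 0 := fun s hs => by
    rw [SS_PS_mem a F hF s hs, hS, PS_zero _ hS]; simp
  induction s with
  | nil =>
    have := hS []
    rw [SS_nil] at this
    simp [SS_nil, IS_cons, PS_cons, PS_nil, IS_nil, this]
  | cons x s ih =>
    have hs' := hs
    simp only [List.mem_cons, not_or] at hs
    have h1 := key _ hs'
    rw [SS_cons] at h1 ⊢
    simp only [IS_cons _ x, SS_add, ih hs.2, IS_cons _ a]
    rw [PS_of_notMem a F hF _ hs', IS_of_notMem a F hF _ hs.2]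
    linarith

lemma SS_PS_notMem (a : α) (F : List α → ℝ) (hF : ∀ w, a ∈ w → F w = 0) (k : ℝ)
    (hk : ∀ w, F w ≠ 0 → (w.length : ℝ) = k) (s : List α) :
    SS a (PS F) s = (s.length + 1 - k) * PS F s := by
  induction s generalizing F k with
  | nil => simp [SS_nil, PS_nil, PS_cons, hF]
  | cons x s ih =>
    have h1 := ih (fun w => F (x :: w)) (fun w hw => hF _ (by simp [hw])) (k - 1)
      (fun w hw => by have := hk _ hw; simp at this; linarith)
    have h0 : PS F (a :: x :: s) = 0 := by
      rw [PS_cons, PS_zero, hF] <;> simp [hF]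
    have h2 : F [x] * (k - 1) = 0 := by
      by_cases h : F [x] = 0
      · simp [h]
      · have := hk _ h; simp at this; simp [← this]
    rw [SS_cons, h0]
    simp only [PS_cons, SS_add, SS_const, h1]
    push_cast [List.length_cons]
    linarith

lemma SS_IS_notMem (a : α) (F : List α → ℝ) (hF : ∀ w, a ∈ w → F w = 0) (k : ℝ)
    (hk : ∀ w, F w ≠ 0 → (w.length : ℝ) = k) (s : List α) :
    SS a (IS F) s = (s.length + 2 - k) * IS F s := by
  induction s with
  | nil => simp [SS_nil, IS_nil, IS_cons, PS_cons, PS_nil, hF]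
  | cons x s ih =>
    have h0 : PS F (a :: x :: s) = 0 := by
      rw [PS_cons, PS_zero, hF] <;> simp [hF]
    have h1 := SS_PS_notMem a F hF k hk (x :: s)
    rw [SS_cons, h0] at h1
    rw [SS_cons]
    simp only [IS_cons _ x, SS_add, ih, IS_cons _ a, h0]
    push_cast [List.length_cons] at h1 ⊢
    linarith

lemma mem_prefs (s p : List α) : p ∈ prefs s ↔ p ≠ [] ∧ p <+: s := by
  induction s generalizing p with
  | nil => simp [prefs]
  | cons x s ih =>
    cases p with
    | nil => simp [prefs]
    | cons y p =>
      cases p with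
      | nil => simp [prefs, ih, List.cons_prefix_cons]
      | cons z p => simp [prefs, ih, List.cons_prefix_cons]; tauto

lemma nodup_prefs (s : List α) : (prefs s).Nodup := by
  induction s with
  | nil => simp [prefs]
  | cons x s ih =>
    simp only [prefs, List.nodup_cons]
    refine ⟨by simp [mem_prefs], ih.map (List.cons_injective)⟩

lemma mem_infs (s p : List α) : p ∈ infs s ↔ p ≠ [] ∧ p <:+: s := by
  induction s with
  | nil => simp [infs]
  | cons x s ih => simp only [infs, List.mem_append, mem_prefs, ih, List.infix_cons_iff]; tauto

lemma nodup_infs (s : List α) (hs : s.Nodup) : (infs s).Nodup := by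
  induction s with
  | nil => simp [infs]
  | cons x s ih =>
    rw [List.nodup_cons] at hs
    refine List.Nodup.append (nodup_prefs _) (ih hs.2) ?_
    intro p hp hq
    rw [mem_prefs] at hp
    rw [mem_infs] at hq
    cases p with
    | nil => simp at hp
    | cons y p =>
      rw [List.cons_prefix_cons] at hp
      exact hs.1 (hp.2.1 ▸ hq.2.subset (by simp))

lemma mem_ins (a : α) (s p : List α) :
    p ∈ List.permutations'Aux a s ↔ ∃ u v, s = u ++ v ∧ p = u ++ a :: v := by
  induction s generalizing p with
  | nil => simp [and_assoc]
  | cons x s ih =>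
    simp only [List.permutations'Aux, List.mem_cons, List.mem_map, ih]
    constructor
    · rintro (rfl | ⟨q, ⟨u, v, rfl, rfl⟩, rfl⟩)
      · exact ⟨[], _, rfl, rfl⟩
      · exact ⟨x :: u, v, rfl, rfl⟩
    · rintro ⟨u, v, h, rfl⟩
      cases u with
      | nil => left; simp at h; simp [h]
      | cons y u =>
        simp at h
        right
        exact ⟨u ++ a :: v, ⟨u, v, h.2, rfl⟩, by simp [h.1]⟩

variable {n : ℕ}

lemma mem_rankings (A : Finset (Fin n)) (w : Word n) : w ∈ rankings n A ↔ IsRanking A w := by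
  simp only [rankings, List.mem_toFinset, List.mem_permutations, IsRanking]
  constructor
  · intro h
    exact ⟨h.nodup_iff.2 A.nodup_toList, by rw [List.toFinset_eq_of_perm _ _ h]; simp⟩
  · rintro ⟨h, rfl⟩
    exact (List.toFinset_toList h).symm

lemma mem_allWords (w : Word n) : w ∈ allWords n ↔ w.Nodup := by
  simp [allWords, mem_rankings, IsRanking]

lemma _root_.IsRanking.length {A : Finset (Fin n)} {w : Word n} (h : IsRanking A w) :
    w.length = A.card := by
  rw [← h.2, List.toFinset_card_of_nodup h.1]

lemma _root_.IsRanking.mem {A : Finset (Fin n)} {w : Word n} (h : IsRanking A w) (a : Fin n) :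
    a ∈ w ↔ a ∈ A := by
  rw [← h.2, List.mem_toFinset]

lemma isRanking_iff {A : Finset (Fin n)} {w : Word n} :
    IsRanking A w ↔ w.Nodup ∧ ∀ a, a ∈ w ↔ a ∈ A := by
  simp [IsRanking, Finset.ext_iff]

lemma isRanking_empty {w : Word n} : IsRanking ∅ w ↔ w = [] := by
  simp only [IsRanking, List.toFinset_eq_empty_iff]
  constructor
  · exact fun h => h.2
  · rintro rfl; simp

lemma isRanking_restrict {A C : Finset (Fin n)} (hC : C ⊆ A) {σ : Word n} (h : IsRanking A σ) :
    IsRanking C (restrictWord σ C) := by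
  rw [isRanking_iff] at *
  refine ⟨h.1.filter _, fun a => ?_⟩
  simp only [restrictWord, List.mem_filter, h.2, decide_eq_true_eq]
  exact ⟨fun h => h.2, fun h => ⟨hC h, h⟩⟩

lemma sublist_iff {C : Finset (Fin n)} {π σ : Word n} (hπ : IsRanking C π) (hσ : σ.Nodup) 
    (hC : ∀ a ∈ C, a ∈ σ) : π <+ σ ↔ π = restrictWord σ C := by
  constructor
  · intro h
    have h1 : restrictWord π C = π := List.filter_eq_self.2 (by simp [hπ.mem])
    have h2 : π <+ restrictWord σ C := by
      rw [← h1]; exact h.filter _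
    apply h2.eq_of_length
    have hnd : (restrictWord σ C).Nodup := hσ.filter _
    rw [← List.toFinset_card_of_nodup hπ.1, ← List.toFinset_card_of_nodup hnd]
    congr 1
    ext a
    simp only [List.mem_toFinset, restrictWord, List.mem_filter, hπ.mem, decide_eq_true_eq]
    exact ⟨fun h => ⟨hC _ h, h⟩, fun h => h.2⟩
  · rintro rfl; exact List.filter_sublist

lemma memL_marg (B : Finset (Fin n)) (F : Word n → ℝ) : MemL B (marg B F) := by
  intro w hw
  by_contra h
  simp [marg, h] at hw

lemma memL_synth (B : Finset (Fin n)) (F : Word n → ℝ) : MemL B (synth B F) := by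
  intro w hw
  by_contra h
  simp [synth, h] at hw

lemma marg_self (A : Finset (Fin n)) (F : Word n → ℝ) (hF : MemL A F) : marg A F = F := by
  funext π
  by_cases h : IsRanking A π
  · simp only [marg, h, if_true]
    rw [Finset.sum_eq_single π]
    · simp
    · intro σ _ hne
      split_ifs with hs
      · by_contra h0
        have := hF _ h0
        exact hne (hs.eq_of_length (by rw [h.length, this.length])).symm
      · rfl
    · intro h'; exact absurd ((mem_allWords _).2 h.1) h'
  · simp only [marg, h, if_false]
    by_contra h0
    exact h (hF _ (Ne.symm h0))

lemma marg_marg {A B C : Finset (Fin n)} (hCB : C ⊆ B) (hBA : B ⊆ A) (F : Word n → ℝ)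
    (hF : MemL A F) : marg C (marg B F) = marg C F := by
  funext π
  by_cases h : IsRanking C π
  · simp only [marg, h, if_true]
    have h1 : ∀ τ ∈ allWords n, (if π <+ τ then (if IsRanking B τ then
        ∑ σ ∈ allWords n, (if τ <+ σ then F σ else 0) else 0) else 0) =
        ∑ σ ∈ allWords n, (if π <+ τ ∧ IsRanking B τ ∧ τ <+ σ then F σ else 0) := by
      intro τ _
      split_ifs with h1 h2 <;> simp [*]
    rw [Finset.sum_congr rfl h1, Finset.sum_comm]
    refine Finset.sum_congr rfl fun σ hσ => ?_
    by_cases h0 : F σ = 0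
    · simp [h0]
    have hr := hF _ h0
    have hrB := isRanking_restrict hBA hr
    rw [Finset.sum_eq_single (restrictWord σ B)]
    · have e : π <+ restrictWord σ B ↔ π <+ σ := by
        rw [sublist_iff h hrB.1 (fun a ha => (hrB.mem a).2 (hCB ha)),
          sublist_iff h hr.1 (fun a ha => (hr.mem a).2 (hBA (hCB ha)))]
        have : restrictWord (restrictWord σ B) C = restrictWord σ C := by
          simp only [restrictWord, List.filter_filter]
          apply List.filter_congr
          intro a _
          by_cases ha : a ∈ C
          · simp [ha, hCB ha]
          · simp [ha]
        rw [this]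
      have e2 : restrictWord σ B <+ σ := List.filter_sublist
      simp [e, hrB, e2]
    · intro τ _ hne
      rw [if_neg]
      rintro ⟨_, h2, h3⟩
      exact hne ((sublist_iff h2 hr.1 (fun a ha => (hr.mem a).2 (hBA ha))).1 h3)
    · intro h'; exact absurd ((mem_allWords _).2 hrB.1) h'
  · simp [marg, h]

lemma marg_zero (B : Finset (Fin n)) : marg B (0 : Word n → ℝ) = 0 := by
  funext π; simp [marg]

lemma marg_add (B : Finset (Fin n)) (F G : Word n → ℝ) : marg B (F + G) = marg B F + marg B G := by
  funext π
  simp only [marg, Pi.add_apply]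
  split_ifs with h
  · rw [← Finset.sum_add_distrib]
    exact Finset.sum_congr rfl fun σ _ => by split_ifs <;> simp
  · simp

lemma marg_sub (B : Finset (Fin n)) (F G : Word n → ℝ) : marg B (F - G) = marg B F - marg B G := by
  have := marg_add B (F - G) G
  rw [sub_add_cancel] at this
  rw [this, add_sub_cancel_right]

lemma marg_sum {ι : Type*} (B : Finset (Fin n)) (s : Finset ι) (F : ι → Word n → ℝ) :
    marg B (∑ i ∈ s, F i) = ∑ i ∈ s, marg B (F i) := by
  classical
  induction s using Finset.induction_on with
  | empty => simp [marg_zero]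
  | insert i s hi ih => rw [Finset.sum_insert hi, Finset.sum_insert hi, marg_add, ih]

lemma marg_erase {A : Finset (Fin n)} {a : Fin n} (ha : a ∈ A) (F : Word n → ℝ) (hF : MemL A F)
    {τ : Word n} (hτ : IsRanking (A.erase a) τ) : marg (A.erase a) F τ = SS a F τ := by
  have hat : a ∉ τ := by rw [hτ.mem]; simp
  have hnd := List.nodup_permutations'Aux_of_notMem τ a hat
  rw [marg, if_pos hτ, SS, ← List.sum_toFinset F hnd, ← Finset.sum_filter]
  symm
  apply Finset.sum_subset
  · intro p hp
    rw [List.mem_toFinset, mem_ins] at hp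
    obtain ⟨u, v, rfl, rfl⟩ := hp
    rw [Finset.mem_filter, mem_allWords]
    refine ⟨?_, by simp⟩
    exact List.nodup_middle.2 (List.nodup_cons.2 ⟨hat, hτ.1⟩)
  · intro p hp hp'
    by_contra h0
    apply hp'
    have hr := hF _ h0
    rw [List.mem_toFinset, mem_ins]
    have hap : a ∈ p := (hr.mem a).2 ha
    obtain ⟨u, v, rfl⟩ := List.append_of_mem hap
    refine ⟨u, v, ?_, rfl⟩
    have h1 := (Finset.mem_filter.1 hp).2
    have hnd := hr.1
    rw [List.nodup_middle, List.nodup_cons] at hnd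
    have h2 : τ = restrictWord _ _ :=
      (sublist_iff hτ hr.1 (fun b hb => (hr.mem b).2 (Finset.mem_of_mem_erase hb))).1 h1
    have h3 : u ++ v = restrictWord _ _ := (sublist_iff (C := A.erase a) (π := u ++ v) (by
      rw [isRanking_iff]
      refine ⟨hnd.2, fun b => ?_⟩
      have := hr.mem b
      simp only [List.mem_append, List.mem_cons] at this hnd
      rw [Finset.mem_erase, ← this, List.mem_append]
      constructor
      · intro hb
        refine ⟨?_, by tauto⟩
        rintro rfl; exact hnd.1 hb
      · tauto)
      hr.1 (fun b hb => (hr.mem b).2 (Finset.mem_of_mem_erase hb))).1 (by simp)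
    rw [h2, h3]

lemma synth_apply {A B : Finset (Fin n)} (hB : B ≠ ∅) (X : Word n → ℝ) (hX : MemL B X)
    {σ : Word n} (hσ : IsRanking A σ) :
    synth A X σ = IS X σ / (Nat.factorial (A.card - B.card + 1) : ℝ) := by
  have h0 : X [] = 0 := by
    by_contra h
    have := (hX _ h).2
    simp at this; exact hB this.symm
  rw [synth, if_pos hσ, h0, zero_div, zero_add, IS, ← List.sum_toFinset X (nodup_infs σ hσ.1),
    ← Finset.sum_filter, Finset.sum_div]
  have : (infs σ).toFinset = (allWords n).filter (fun π => π ≠ [] ∧ π <:+: σ) := by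
    ext π
    simp only [List.mem_toFinset, mem_infs, Finset.mem_filter, mem_allWords]
    exact ⟨fun h => ⟨hσ.1.sublist h.2.sublist, h⟩, fun h => h.2⟩
  rw [this]
  refine Finset.sum_congr rfl fun π _ => ?_
  by_cases h : X π = 0
  · simp [h]
  · rw [(hX _ h).length]

lemma synth_apply_empty {A : Finset (Fin n)} (X : Word n → ℝ) (hX : MemL ∅ X)
    {σ : Word n} (hσ : IsRanking A σ) :
    synth A X σ = X [] / (Nat.factorial A.card : ℝ) := by
  rw [synth, if_pos hσ, Finset.sum_eq_zero, add_zero]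
  intro π _
  split_ifs with h
  · have : X π = 0 := by
      by_contra h'
      exact h.1 (isRanking_empty.1 (hX _ h'))
    simp [this]
  · rfl

lemma SS_congr (a : α) (F G : List α → ℝ) (s : List α)
    (h : ∀ u v, s = u ++ v → F (u ++ a :: v) = G (u ++ a :: v)) : SS a F s = SS a G s := by
  unfold SS
  congr 1
  apply List.map_congr_left
  intro p hp
  obtain ⟨u, v, h1, rfl⟩ := (mem_ins _ _ _).1 hp
  exact h u v h1

lemma isRanking_ins {A : Finset (Fin n)} {a : Fin n} (ha : a ∈ A) {u v : Word n}
    (h : IsRanking (A.erase a) (u ++ v)) : IsRanking A (u ++ a :: v) := by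
  rw [isRanking_iff]
  refine ⟨List.nodup_middle.2 (List.nodup_cons.2 ⟨by rw [h.mem]; simp, h.1⟩), fun b => ?_⟩
  have := h.mem b
  simp only [List.mem_append, List.mem_cons, Finset.mem_erase] at this ⊢
  by_cases hb : b = a
  · subst hb; simp [ha]
  · tauto

lemma memH_iff {B : Finset (Fin n)} (hB : 2 ≤ B.card ∨ B = ∅) (X : Word n → ℝ) :
    MemH B X ↔ MemL B X ∧ ∀ B', B' ⊂ B → (2 ≤ B'.card ∨ B' = ∅) → marg B' X = 0 := by
  unfold MemH
  refine and_congr_right fun hL => ?_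
  have hsum : ∑ π ∈ rankings n B, X π = ∑ π ∈ allWords n, X π := by
    apply Finset.sum_subset
    · intro w hw; rw [mem_allWords]; exact ((mem_rankings _ _).1 hw).1
    · intro w _ hw
      by_contra h; exact hw ((mem_rankings _ _).2 (hL _ h))
  have hm : marg ∅ X = 0 ↔ ∑ π ∈ allWords n, X π = 0 := by
    constructor
    · intro h
      have := congrFun h []
      simpa [marg, isRanking_empty] using this
    · intro h
      funext w
      by_cases hw : w = []
      · subst hw; simpa [marg, isRanking_empty] using h
      · simp [marg, isRanking_empty, hw]
  rw [hsum, ← hm]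
  constructor
  · rintro ⟨h1, h2⟩ B' hB' (h | rfl)
    · exact h1 B' hB' h
    · rcases hB with hB | rfl
      · exact h2 hB
      · exact absurd hB' (by simp)
  · intro h
    refine ⟨fun B' hB' h' => h B' hB' (Or.inl h'), fun h' => h ∅ ?_ (Or.inr rfl)⟩
    rw [Finset.empty_ssubset, ← Finset.card_pos]; omega

lemma marg_ssubset {B : Finset (Fin n)} (hB : 2 ≤ B.card ∨ B = ∅) (X : Word n → ℝ)
    (hX : MemH B X) (B' : Finset (Fin n)) (hB' : B' ⊂ B) : marg B' X = 0 := by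
  rw [memH_iff hB] at hX
  by_cases h : 2 ≤ B'.card ∨ B' = ∅
  · exact hX.2 B' hB' h
  · have h1 : B'.card = 1 := by
      rw [← Finset.card_eq_zero] at h; omega
    obtain ⟨b, rfl⟩ := Finset.card_eq_one.1 h1
    have h0 : marg ∅ X = 0 := hX.2 ∅ (lt_of_le_of_lt (Finset.empty_subset _) hB') (Or.inr rfl)
    have h0 := congrFun h0 []
    simp only [marg, isRanking_empty, if_true, List.nil_sublist, Pi.zero_apply] at h0
    funext π
    by_cases hπ : IsRanking {b} π
    · simp only [marg, hπ, if_true, Pi.zero_apply]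
      refine Eq.trans (Finset.sum_congr rfl fun σ _ => ?_) h0
      by_cases hz : X σ = 0
      · simp [hz]
      rw [if_pos]
      have hl := hπ.length
      rw [Finset.card_singleton, List.length_eq_one_iff] at hl
      obtain ⟨c, rfl⟩ := hl
      rw [List.singleton_sublist, (hX.1 _ hz).mem]
      apply hB'.1
      rw [← hπ.mem]; simp
    · simp [marg, hπ]

lemma marg_erase_synth {A B : Finset (Fin n)} (hB : 2 ≤ B.card ∨ B = ∅) (hBA : B ⊆ A)
    (X : Word n → ℝ) (hX : MemH B X) {a : Fin n} (ha : a ∈ A) :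
    marg (A.erase a) (synth A X) = if a ∈ B then 0 else synth (A.erase a) X := by
  funext τ
  by_cases hτ : IsRanking (A.erase a) τ
  swap
  · split_ifs <;> simp [marg, synth, hτ]
  have hat : a ∉ τ := by rw [hτ.mem]; simp
  have hcard : (A.erase a).card + 1 = A.card := Finset.card_erase_add_one ha
  rw [marg_erase ha _ (memL_synth A X) hτ]
  by_cases hB0 : B = ∅
  · subst hB0
    rw [SS_congr a _ (fun _ => X [] / (Nat.factorial A.card : ℝ))]
    · simp only [Finset.notMem_empty, if_false]
      rw [SS_const, synth_apply_empty X hX.1 hτ, hτ.length, ← hcard, Nat.factorial_succ]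
      push_cast
      field_simp
    · rintro u v rfl
      exact synth_apply_empty X hX.1 (isRanking_ins ha hτ)
  · rw [SS_congr a _ (fun w => IS X w / (Nat.factorial (A.card - B.card + 1) : ℝ)), SS_div]
    · split_ifs with haB
      · rw [SS_IS_mem a X _ _ τ hat]
        · simp
        · intro w hw
          by_contra h
          exact hw (((hX.1 _ h).mem a).2 haB)
        · intro w
          by_cases hw : IsRanking (B.erase a) w
          · rw [← marg_erase haB X hX.1 hw, marg_ssubset hB X hX _ (Finset.erase_ssubset haB)]; simp
          · rw [SS_congr a _ (fun _ => 0), SS_zero _ _ (fun _ => rfl)]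
            rintro u v rfl
            by_contra h
            apply hw
            have hr := hX.1 _ h
            have hnd := hr.1
            rw [List.nodup_middle, List.nodup_cons] at hnd
            rw [isRanking_iff]
            refine ⟨hnd.2, fun b => ?_⟩
            have := hr.mem b
            simp only [List.mem_append, List.mem_cons] at this hnd
            rw [Finset.mem_erase, ← this, List.mem_append]
            constructor
            · intro hb
              refine ⟨?_, by tauto⟩
              rintro rfl; exact hnd.1 hb
            · tauto
      · rw [SS_IS_notMem a X _ B.card, synth_apply hB0 X hX.1 hτ, hτ.length]
        · have hle : B.card ≤ (A.erase a).card :=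
            Finset.card_le_card (fun b hb => Finset.mem_erase.2 ⟨fun h => haB (h ▸ hb), hBA hb⟩)
          obtain ⟨d, hd⟩ := Nat.exists_eq_add_of_le hle
          have e1 : A.card - B.card + 1 = (d + 1) + 1 := by omega
          have e2 : (A.erase a).card - B.card + 1 = d + 1 := by omega
          rw [e1, e2, hd, Nat.factorial_succ (d + 1)]
          have : ((d + 1).factorial : ℝ) ≠ 0 := by positivity
          have : (d : ℝ) + 1 + 1 ≠ 0 := by positivity
          push_cast
          field_simp
          ring
        · intro w hw
          rw [(hX.1 _ hw).length]
        · intro w hw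
          by_contra h
          exact haB (((hX.1 _ h).mem a).1 hw)
    · rintro u v rfl
      exact synth_apply hB0 X hX.1 (isRanking_ins ha hτ)

lemma marg_synth {B C : Finset (Fin n)} (hB : 2 ≤ B.card ∨ B = ∅)
    (X : Word n → ℝ) (hX : MemH B X) (A : Finset (Fin n)) (hBA : B ⊆ A) (hCA : C ⊆ A) :
    marg C (synth A X) = if B ⊆ C then synth C X else 0 := by
  induction A using Finset.strongInduction with
  | H A ih =>
    by_cases hAC : A = C
    · subst hAC
      rw [if_pos hBA, marg_self _ _ (memL_synth _ _)]
    · obtain ⟨a, ha, haC⟩ := Finset.exists_of_ssubset (lt_of_le_of_ne hCA (Ne.symm hAC))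
      have hCe : C ⊆ A.erase a :=
        fun b hb => Finset.mem_erase.2 ⟨fun h => haC (h ▸ hb), hCA hb⟩
      rw [← marg_marg hCe (Finset.erase_subset a A) _ (memL_synth A X),
        marg_erase_synth hB hBA X hX ha]
      by_cases haB : a ∈ B
      · rw [if_pos haB, marg_zero, if_neg]
        exact fun h => haC (h haB)
      · rw [if_neg haB]
        exact ih _ (Finset.erase_ssubset ha)
          (fun b hb => Finset.mem_erase.2 ⟨fun h => haB (h ▸ hb), hBA hb⟩) hCe

lemma synth_self {B : Finset (Fin n)} (X : Word n → ℝ) (hX : MemL B X) : synth B X = X := by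
  funext σ
  by_cases hσ : IsRanking B σ
  · by_cases hB : B = ∅
    · subst hB
      rw [synth_apply_empty X hX hσ, isRanking_empty.1 hσ]; simp
    · rw [synth_apply hB X hX hσ, IS, ← List.sum_toFinset X (nodup_infs σ hσ.1),
        Finset.sum_eq_single σ]
      · simp
      · intro p hp hne
        by_contra h
        rw [List.mem_toFinset, mem_infs] at hp
        exact hne (hp.2.eq_of_length (by rw [hσ.length, (hX _ h).length]))
      · intro h
        exfalso; apply h
        rw [List.mem_toFinset, mem_infs]
        refine ⟨?_, List.infix_rfl⟩
        rintro rfl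
        exact hB (by simpa using hσ.2.symm)
  · rw [synth, if_neg hσ]
    by_contra h
    exact hσ (hX _ (Ne.symm h))

lemma mem_Pbar {A B : Finset (Fin n)} : B ∈ Pbar A ↔ B ⊆ A ∧ (2 ≤ B.card ∨ B = ∅) := by
  simp [Pbar]

/-- Marginal of a synthesized sum. -/
lemma marg_sum_synth {A C : Finset (Fin n)} (hC : C ⊆ A) (X : Finset (Fin n) → Word n → ℝ)
    (s : Finset (Finset (Fin n))) (hs : ∀ B ∈ s, B ⊆ A ∧ (2 ≤ B.card ∨ B = ∅))
    (hX : ∀ B ∈ s, MemH B (X B)) :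
    marg C (∑ B ∈ s, synth A (X B)) = ∑ B ∈ s with B ⊆ C, synth C (X B) := by
  rw [marg_sum, Finset.sum_filter]
  exact Finset.sum_congr rfl fun B hB =>
    marg_synth (hs B hB).2 _ (hX B hB) A (hs B hB).1 hC

lemma split_self {A C : Finset (Fin n)} (hC : C ∈ Pbar A) (f : Finset (Fin n) → Word n → ℝ) :
    ∑ B ∈ Pbar A with B ⊆ C, f B = f C + ∑ B ∈ Pbar A with B ⊂ C, f B := by
  have : (Pbar A).filter (fun B => B ⊆ C) = insert C ((Pbar A).filter (fun B => B ⊂ C)) := by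
    ext B
    simp only [Finset.mem_filter, Finset.mem_insert]
    constructor
    · rintro ⟨h1, h2⟩
      rcases eq_or_lt_of_le h2 with h | h
      · exact Or.inl h
      · exact Or.inr ⟨h1, h⟩
    · rintro (rfl | ⟨h1, h2⟩)
      · exact ⟨hC, Finset.Subset.refl _⟩
      · exact ⟨h1, h2.1⟩
  rw [this, Finset.sum_insert (by simp)]

lemma determined {A : Finset (Fin n)} {F : Word n → ℝ} {X : Finset (Fin n) → Word n → ℝ}
    (hX : ∀ B ∈ Pbar A, MemH B (X B)) (h : F = ∑ B ∈ Pbar A, synth A (X B))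
    {C : Finset (Fin n)} (hC : C ∈ Pbar A) :
    X C = marg C F - ∑ B ∈ Pbar A with B ⊂ C, synth C (X B) := by
  have h1 := marg_sum_synth (mem_Pbar.1 hC).1 X (Pbar A) (fun B => mem_Pbar.1) hX
  rw [← h, split_self hC, synth_self _ (hX C hC).1] at h1
  rw [h1, add_sub_cancel_right]

noncomputable def comp (A : Finset (Fin n)) (F : Word n → ℝ) : Finset (Fin n) → Word n → ℝ :=
  Finset.strongInduction (p := fun _ => Word n → ℝ) fun C ih =>
    if C ∈ Pbar A then
      marg C F - ∑ B ∈ Pbar A, if h : B ⊂ C then synth C (ih B h) else 0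
    else 0

lemma comp_eq (A : Finset (Fin n)) (F : Word n → ℝ) {C : Finset (Fin n)} (hC : C ∈ Pbar A) :
    comp A F C = marg C F - ∑ B ∈ Pbar A with B ⊂ C, synth C (comp A F B) := by
  rw [comp, Finset.strongInduction_eq, if_pos hC, Finset.sum_filter]
  simp only [dite_eq_ite]

lemma comp_eq_zero (A : Finset (Fin n)) (F : Word n → ℝ) {C : Finset (Fin n)} (hC : C ∉ Pbar A) :
    comp A F C = 0 := by
  rw [comp, Finset.strongInduction_eq, if_neg hC]

lemma memL_sub {B : Finset (Fin n)} {F G : Word n → ℝ} (hF : MemL B F) (hG : MemL B G) :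
    MemL B (F - G) := by
  intro w hw
  by_contra h
  have h1 : F w = 0 := by by_contra h'; exact h (hF _ h')
  have h2 : G w = 0 := by by_contra h'; exact h (hG _ h')
  simp [h1, h2] at hw

lemma memL_sum {ι : Type*} {B : Finset (Fin n)} (s : Finset ι) (F : ι → Word n → ℝ)
    (hF : ∀ i ∈ s, MemL B (F i)) : MemL B (∑ i ∈ s, F i) := by
  intro w hw
  rw [Finset.sum_apply] at hw
  obtain ⟨i, hi, h⟩ := Finset.exists_ne_zero_of_sum_ne_zero hw
  exact hF i hi _ h

lemma memH_comp (A : Finset (Fin n)) (F : Word n → ℝ) (hF : MemL A F) (C : Finset (Fin n)) :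
    C ∈ Pbar A → MemH C (comp A F C) := by
  induction C using Finset.strongInduction with
  | H C ih =>
    intro hC
    have hC' := mem_Pbar.1 hC
    rw [memH_iff hC'.2]
    constructor
    · rw [comp_eq A F hC]
      exact memL_sub (memL_marg _ _) (memL_sum _ _ fun B _ => memL_synth _ _)
    · intro D hD hD2
      have hDA : D ∈ Pbar A := mem_Pbar.2 ⟨hD.1.trans hC'.1, hD2⟩
      rw [comp_eq A F hC, marg_sub, marg_marg hD.1 hC'.1 F hF,
        marg_sum_synth hD.1 _ _ (fun B hB => ?_) (fun B hB => ?_)]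
      · have e : ((Pbar A).filter (fun B => B ⊂ C)).filter (fun B => B ⊆ D) =
            (Pbar A).filter (fun B => B ⊆ D) := by
          ext B
          simp only [Finset.mem_filter]
          exact ⟨fun h => ⟨h.1.1, h.2⟩, fun h => ⟨⟨h.1, lt_of_le_of_lt h.2 hD⟩, h.2⟩⟩
        rw [e, split_self hDA, synth_self _ (ih D hD hDA).1, comp_eq A F hDA]
        simp
      · rw [Finset.mem_filter] at hB
        exact ⟨hB.2.1, (mem_Pbar.1 hB.1).2⟩
      · rw [Finset.mem_filter] at hB
        exact ih B hB.2 hB.1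

end MRA

/-- **MRA decomposition (existence and uniqueness).**
For every `A ⊆ [n]` with `|A| ≥ 2` and every `F ∈ L(Γ(A))`, there is a unique family
`(X_B)_{B ∈ P̄(A)}` with `X_B ∈ H_B` such that `F = Σ_{B ∈ P̄(A)} φ_A X_B`. -/
theorem mra_decomposition {n : ℕ} (hn : 2 ≤ n) (A : Finset (Fin n)) (hA : 2 ≤ A.card)
    (F : Word n → ℝ) (hF : MemL A F) :
    ∃! X : Finset (Fin n) → Word n → ℝ,
      (∀ B ∈ Pbar A, MemH B (X B)) ∧
      (∀ B ∉ Pbar A, X B = 0) ∧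
      F = ∑ B ∈ Pbar A, synth A (X B) := by
  have hAA : A ∈ Pbar A := MRA.mem_Pbar.2 ⟨Finset.Subset.refl _, Or.inl hA⟩
  have hH : ∀ B ∈ Pbar A, MemH B (MRA.comp A F B) := MRA.memH_comp A F hF
  refine ⟨MRA.comp A F, ⟨hH, fun B hB => MRA.comp_eq_zero A F hB, ?_⟩, ?_⟩
  · have h1 := MRA.split_self hAA (fun B => synth A (MRA.comp A F B))
    rw [Finset.filter_true_of_mem (fun B hB => (MRA.mem_Pbar.1 hB).1)] at h1
    rw [h1, MRA.synth_self _ (hH A hAA).1, MRA.comp_eq A F hAA, MRA.marg_self A F hF]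
    simp
  · rintro Y ⟨hY1, hY2, hY3⟩
    funext C
    induction C using Finset.strongInduction with
    | H C ih =>
      by_cases hC : C ∈ Pbar A
      · rw [MRA.determined hY1 hY3 hC, MRA.comp_eq A F hC]
        congr 1
        refine Finset.sum_congr rfl fun B hB => ?_
        rw [ih B (Finset.mem_filter.1 hB).2]
      · rw [hY2 C hC, MRA.comp_eq_zero A F hC]
end

section
/- Dimension of the localization spaces: for every B ⊆ [n] with |B| = k ≥ 2, the real vector space H_B has dimension d_k, the number of derangements of a k-element set. -/
open Finset
open scoped List

theorem marg_add {n : ℕ} (B : Finset (Fin n)) (F G : Word n → ℝ) :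
    marg B (F + G) = marg B F + marg B G := by
  funext π
  by_cases h : IsRanking B π
  · simp only [marg, Pi.add_apply, if_pos h, ← Finset.sum_add_distrib]
    refine Finset.sum_congr rfl fun σ _ => ?_
    by_cases hs : π <+ σ <;> simp [hs]
  · simp [marg, if_neg h]

theorem marg_smul {n : ℕ} (B : Finset (Fin n)) (c : ℝ) (F : Word n → ℝ) :
    marg B (c • F) = c • marg B F := by
  funext π
  by_cases h : IsRanking B π
  · simp only [marg, Pi.smul_apply, smul_eq_mul, if_pos h, Finset.mul_sum]
    refine Finset.sum_congr rfl fun σ _ => ?_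
    by_cases hs : π <+ σ <;> simp [hs]
  · simp [marg, if_neg h]

/-- The localization space `H_B` as a submodule of `L(Γ̄_n)`. -/
noncomputable def Hspace {n : ℕ} (B : Finset (Fin n)) : Submodule ℝ (Word n → ℝ) where
  carrier := {F | MemH B F}
  zero_mem' := by
    refine ⟨?_, fun B' _ _ => ?_, fun _ => ?_⟩
    · intro w hw; simp at hw
    · funext π; simp [marg]
    · simp
  add_mem' := by
    rintro F G ⟨hF1, hF2, hF3⟩ ⟨hG1, hG2, hG3⟩
    refine ⟨?_, ?_, ?_⟩
    · intro w hw
      by_contra h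
      have h1 : F w = 0 := by by_contra h'; exact h (hF1 w h')
      have h2 : G w = 0 := by by_contra h'; exact h (hG1 w h')
      exact hw (by simp [h1, h2])
    · intro B' hsub hcard
      rw [marg_add, hF2 B' hsub hcard, hG2 B' hsub hcard, add_zero]
    · intro hc
      simp only [Pi.add_apply, Finset.sum_add_distrib, hF3 hc, hG3 hc, add_zero]
  smul_mem' := by
    rintro c F ⟨hF1, hF2, hF3⟩
    refine ⟨?_, ?_, ?_⟩
    · intro w hw
      by_contra h
      have h1 : F w = 0 := by by_contra h'; exact h (hF1 w h')
      exact hw (by simp [h1])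
    · intro B' hsub hcard
      rw [marg_smul, hF2 B' hsub hcard, smul_zero]
    · intro hc
      simp only [Pi.smul_apply, smul_eq_mul, ← Finset.mul_sum, hF3 hc, mul_zero]

/-- deletion marginal -/
def del {n : ℕ} (a : Fin n) : (Word n → ℝ) → Word n → ℝ
  | F, [] => F [a]
  | F, (b :: w) => F (a :: b :: w) + del a (fun v => F (b :: v)) w
termination_by structural _ w => w

theorem del_add {n : ℕ} (a : Fin n) (w : Word n) : ∀ F G : Word n → ℝ,
    del a (F + G) w = del a F w + del a G w := by
  induction w with
  | nil => intro F G; simp [del]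
  | cons b w ih =>
    intro F G
    have := ih (fun v => F (b :: v)) (fun v => G (b :: v))
    simp only [del, Pi.add_apply]
    have h2 : (fun v => F (b :: v) + G (b :: v))
      = (fun v => F (b :: v)) + (fun v => G (b :: v)) := rfl
    rw [h2, this]; ring

theorem del_smul {n : ℕ} (a : Fin n) (w : Word n) : ∀ (c : ℝ) (F : Word n → ℝ),
    del a (c • F) w = c * del a F w := by
  induction w with
  | nil => intro c F; simp [del]
  | cons b w ih =>
    intro c F
    have := ih c (fun v => F (b :: v))
    simp only [del, Pi.smul_apply, smul_eq_mul]
    have h2 : (fun v => c * F (b :: v)) = c • (fun v => F (b :: v)) := rfl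
    rw [h2, this]; ring

/-- linear version of `del` -/
def delL {n : ℕ} (a : Fin n) : (Word n → ℝ) →ₗ[ℝ] (Word n → ℝ) where
  toFun := del a
  map_add' F G := by funext w; exact del_add a w F G
  map_smul' c F := by funext w; exact del_smul a w c F

theorem delL_apply {n : ℕ} (a : Fin n) (F : Word n → ℝ) : delL a F = del a F := rfl

theorem del_zero {n : ℕ} (a : Fin n) : del a (0 : Word n → ℝ) = 0 := (delL a).map_zero

/-- prepend -/
def pre {n : ℕ} (b : Fin n) (G : Word n → ℝ) : Word n → ℝ
  | [] => 0
  | (c :: w) => if c = b then G w else 0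

theorem del_pre_ne {n : ℕ} {a b : Fin n} (h : a ≠ b) (G : Word n → ℝ) :
    del a (pre b G) = pre b (del a G) := by
  funext w
  cases w with
  | nil => simp [del, pre, h]
  | cons c w =>
    by_cases hc : c = b
    · simp [del, pre, h, hc]
    · have : (fun _ : Word n => (0 : ℝ)) = 0 := rfl
      simp [del, pre, h, hc, this, del_zero]

theorem del_eq_zero {n : ℕ} (b : Fin n) (w : Word n) : ∀ (G : Word n → ℝ),
    (∀ v, b ∈ v → G v = 0) → del b G w = 0 := by
  induction w with
  | nil => intro G h; simp [del, h]
  | cons c w ih =>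
    intro G h
    simp only [del]
    rw [h _ (by simp), ih _ (fun v hv => h _ (by simp [hv]))]; simp

theorem del_pre_self {n : ℕ} (b : Fin n) (G : Word n → ℝ) (h : ∀ v, b ∈ v → G v = 0) :
    del b (pre b G) = G := by
  funext w
  cases w with
  | nil => simp [del, pre]
  | cons c w =>
    by_cases hc : c = b
    · subst hc
      simp [del, pre, del_eq_zero c w G h]
    · have : (fun _ : Word n => (0 : ℝ)) = 0 := rfl
      simp [del, pre, hc, this, del_zero]

theorem del_comm {n : ℕ} (a b : Fin n) (w : Word n) : ∀ F : Word n → ℝ,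
    del a (del b F) w = del b (del a F) w := by
  induction w with
  | nil => intro F; simp [del]; ring
  | cons c w ih =>
    intro F
    have key : ∀ x y : Fin n, del x (del y F) (c :: w)
        = F (y :: x :: c :: w) + (F (x :: y :: c :: w) + del y (fun v => F (x :: c :: v)) w)
          + (del x (fun v => F (y :: c :: v)) w + del x (del y (fun v => F (c :: v))) w) := by
      intro x y
      have h2 : (fun v => del y F (c :: v))
        = (fun v => F (y :: c :: v)) + del y (fun v => F (c :: v)) := rfl
      rw [← del_add, ← h2]; simp only [del]
    rw [key, key, ih]; ring

theorem pre_dirac {n : ℕ} (c : Fin n) (v : Word n) : pre c (dirac v) = dirac (c :: v) := by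
  funext w
  cases w with
  | nil => simp [pre, dirac]
  | cons d w => by_cases h : d = c <;> simp [pre, dirac, h]

theorem del_dirac {n : ℕ} (a : Fin n) (σ : Word n) (hn : σ.Nodup) (ha : a ∈ σ) :
    del a (dirac σ) = dirac (σ.erase a) := by
  induction σ with
  | nil => simp at ha
  | cons c v ih =>
    rw [List.nodup_cons] at hn
    rw [← pre_dirac]
    by_cases hc : a = c
    · subst hc
      rw [del_pre_self, List.erase_cons_head]
      intro u hu
      simp only [dirac]
      rw [if_neg]; rintro rfl; exact hn.1 hu
    · rw [del_pre_ne hc, ih hn.2 (by simpa [hc] using ha), pre_dirac, List.erase_cons_tail]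
      simpa using fun h => hc h.symm

theorem mem_rankings {n : ℕ} (A : Finset (Fin n)) (w : Word n) :
    w ∈ rankings n A ↔ IsRanking A w := by
  simp only [rankings, List.mem_toFinset, List.mem_permutations, IsRanking]
  constructor
  · intro h
    refine ⟨h.nodup_iff.2 A.nodup_toList, ?_⟩
    rw [List.toFinset_eq_of_perm _ _ h, Finset.toList_toFinset]
  · rintro ⟨h, rfl⟩
    exact (List.perm_ext_iff_of_nodup h (Finset.nodup_toList _)).2 (by simp)

theorem card_rankings {n : ℕ} (A : Finset (Fin n)) : (rankings n A).card = A.card.factorial := by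
  rw [rankings, List.toFinset_card_of_nodup, List.length_permutations, Finset.length_toList]
  exact List.nodup_permutations _ A.nodup_toList

theorem mem_allWords {n : ℕ} (w : Word n) : w ∈ allWords n ↔ w.Nodup := by
  simp [allWords, mem_rankings, IsRanking]

theorem expand {n : ℕ} {B : Finset (Fin n)} {F : Word n → ℝ} (hF : MemL B F) :
    F = ∑ σ ∈ rankings n B, F σ • dirac σ := by
  funext w
  simp only [Finset.sum_apply, Pi.smul_apply, smul_eq_mul, dirac, mul_ite, mul_one, mul_zero,
    Finset.sum_ite_eq]
  split_ifs with h
  · rfl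
  · by_contra h'
    exact h ((mem_rankings _ _).2 (hF w h'))

theorem del_expand {n : ℕ} {B : Finset (Fin n)} {F : Word n → ℝ} (hF : MemL B F) {a : Fin n}
    (ha : a ∈ B) : del a F = ∑ σ ∈ rankings n B, F σ • dirac (σ.erase a) := by
  conv_lhs => rw [expand hF]
  rw [← delL_apply, map_sum]
  refine Finset.sum_congr rfl fun σ hσ => ?_
  obtain ⟨h1, h2⟩ := (mem_rankings _ _).1 hσ
  rw [map_smul, delL_apply, del_dirac a σ h1 (by rw [← h2] at ha; simpa using ha)]

theorem isRanking_erase {n : ℕ} {B : Finset (Fin n)} {σ : Word n} (a : Fin n)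
    (h : IsRanking B σ) : IsRanking (B.erase a) (σ.erase a) := by
  refine ⟨h.1.erase a, ?_⟩
  ext x
  rw [← h.2]
  simp [h.1.mem_erase_iff]

theorem memL_del {n : ℕ} {B : Finset (Fin n)} {F : Word n → ℝ} (hF : MemL B F) {a : Fin n}
    (ha : a ∈ B) : MemL (B.erase a) (del a F) := by
  intro w hw
  rw [del_expand hF ha, Finset.sum_apply] at hw
  obtain ⟨σ, hσ, h⟩ := Finset.exists_ne_zero_of_sum_ne_zero hw
  have : w = σ.erase a := by
    by_contra h'
    simp [dirac, h'] at h
  rw [this]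
  exact isRanking_erase a ((mem_rankings _ _).1 hσ)

/-- linear functional summing over superwords -/
noncomputable def Tsum {n : ℕ} (π : Word n) : (Word n → ℝ) →ₗ[ℝ] ℝ where
  toFun F := ∑ σ ∈ allWords n, (if π <+ σ then F σ else 0)
  map_add' F G := by
    rw [← Finset.sum_add_distrib]
    refine Finset.sum_congr rfl fun σ _ => ?_
    split_ifs <;> simp
  map_smul' c F := by
    rw [RingHom.id_apply, smul_eq_mul, Finset.mul_sum]
    refine Finset.sum_congr rfl fun σ _ => ?_
    split_ifs <;> simp

theorem Tsum_dirac {n : ℕ} (π σ : Word n) (h : σ.Nodup) :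
    Tsum π (dirac σ) = if π <+ σ then 1 else 0 := by
  have : ∀ τ ∈ allWords n, (if π <+ τ then dirac σ τ else 0)
      = if τ = σ then (if π <+ σ then (1 : ℝ) else 0) else 0 := by
    intro τ _
    by_cases h : τ = σ
    · subst h; simp [dirac]
    · simp [dirac, h]
  change ∑ τ ∈ allWords n, (if π <+ τ then dirac σ τ else 0) = _
  rw [Finset.sum_congr rfl this, Finset.sum_ite_eq', if_pos ((mem_allWords σ).2 h)]

theorem Tsum_expand {n : ℕ} {B : Finset (Fin n)} {F : Word n → ℝ} (hF : MemL B F) (π : Word n) :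
    Tsum π F = ∑ σ ∈ rankings n B, (if π <+ σ then F σ else 0) := by
  conv_lhs => rw [expand hF]
  rw [map_sum]
  refine Finset.sum_congr rfl fun σ hσ => ?_
  rw [map_smul, Tsum_dirac _ _ ((mem_rankings _ _).1 hσ).1]
  simp

theorem Tsum_del {n : ℕ} {B : Finset (Fin n)} {F : Word n → ℝ} (hF : MemL B F) {a : Fin n}
    (ha : a ∈ B) (π : Word n) (hπ : a ∉ π) : Tsum π (del a F) = Tsum π F := by
  rw [del_expand hF ha, Tsum_expand hF, map_sum]
  refine Finset.sum_congr rfl fun σ hσ => ?_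
  rw [map_smul, Tsum_dirac _ _ (((mem_rankings _ _).1 hσ).1.erase a)]
  have : π <+ σ.erase a ↔ π <+ σ := by
    constructor
    · intro h; exact h.trans List.erase_sublist
    · intro h
      have := h.erase a
      rwa [List.erase_of_not_mem hπ] at this
  simp [this]

theorem isRanking_length {n : ℕ} {B : Finset (Fin n)} {w : Word n} (h : IsRanking B w) :
    w.length = B.card := by
  rw [← h.2, List.toFinset_card_of_nodup h.1]

theorem Tsum_self {n : ℕ} {B : Finset (Fin n)} {F : Word n → ℝ} (hF : MemL B F) (π : Word n)
    (hπ : IsRanking B π) : Tsum π F = F π := by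
  rw [Tsum_expand hF, Finset.sum_eq_single π]
  · simp
  · intro σ hσ hne
    rw [if_neg]
    intro h
    exact hne (h.eq_of_length (by
      rw [isRanking_length hπ, isRanking_length ((mem_rankings _ _).1 hσ)])).symm
  · intro h; exact absurd ((mem_rankings _ _).2 hπ) h

theorem Tsum_nil {n : ℕ} {B : Finset (Fin n)} {F : Word n → ℝ} (hF : MemL B F) :
    Tsum [] F = ∑ σ ∈ rankings n B, F σ := by
  rw [Tsum_expand hF]; simp

theorem marg_apply {n : ℕ} (B : Finset (Fin n)) (F : Word n → ℝ) (π : Word n) :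
    marg B F π = if IsRanking B π then Tsum π F else 0 := rfl

/-- functions in `L(Γ(B))` killed by the deletions of letters in `S` -/
def Kspace {n : ℕ} (B S : Finset (Fin n)) : Submodule ℝ (Word n → ℝ) where
  carrier := {F | MemL B F ∧ ∀ a ∈ S, delL a F = 0}
  zero_mem' := ⟨fun w hw => by simp at hw, fun a _ => map_zero _⟩
  add_mem' := by
    rintro F G ⟨hF1, hF2⟩ ⟨hG1, hG2⟩
    refine ⟨?_, fun a ha => by rw [map_add, hF2 a ha, hG2 a ha, add_zero]⟩
    intro w hw
    by_contra h
    have h1 : F w = 0 := by by_contra h'; exact h (hF1 w h')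
    have h2 : G w = 0 := by by_contra h'; exact h (hG1 w h')
    exact hw (by simp [h1, h2])
  smul_mem' := by
    rintro c F ⟨hF1, hF2⟩
    refine ⟨?_, fun a ha => by rw [map_smul, hF2 a ha, smul_zero]⟩
    intro w hw
    by_contra h
    have h1 : F w = 0 := by by_contra h'; exact h (hF1 w h')
    exact hw (by simp [h1])

theorem mem_Kspace {n : ℕ} {B S : Finset (Fin n)} {F : Word n → ℝ} :
    F ∈ Kspace B S ↔ MemL B F ∧ ∀ a ∈ S, del a F = 0 := Iff.rfl

theorem Hspace_eq {n : ℕ} (B : Finset (Fin n)) (hB : 2 ≤ B.card) : Hspace B = Kspace B B := by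
  ext F
  rw [mem_Kspace]
  change MemH B F ↔ _
  constructor
  · rintro ⟨h1, h2, h3⟩
    refine ⟨h1, fun a ha => ?_⟩
    funext π
    by_contra hne
    have hr := memL_del h1 ha π hne
    apply hne
    have haπ : a ∉ π := by
      intro h
      have : a ∈ π.toFinset := by simpa using h
      rw [hr.2] at this
      simp at this
    have hc := Finset.card_erase_of_mem ha
    by_cases h4 : 2 ≤ (B.erase a).card
    · have := congrFun (h2 _ (Finset.erase_ssubset ha) h4) π
      rw [marg_apply, if_pos hr, ← Tsum_del h1 ha π haπ, Tsum_self (memL_del h1 ha) π hr] at this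
      exact this
    · have h5 := h3 hB
      rw [← Tsum_nil h1, ← Tsum_del h1 ha [] (by simp)] at h5
      have h6 := Tsum_self (memL_del h1 ha) π hr
      rw [Pi.zero_apply, ← h6, ← h5, Tsum_nil (memL_del h1 ha), Tsum_expand (memL_del h1 ha)]
      refine Finset.sum_congr rfl fun σ hσ => ?_
      rw [if_pos]
      have hσ' := (mem_rankings _ _).1 hσ
      have l1 := isRanking_length hσ'
      have l2 := isRanking_length hr
      have hl : (B.erase a).card = 1 := by omega
      rw [hl] at l1 l2
      obtain ⟨x, rfl⟩ := List.length_eq_one_iff.1 l1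
      obtain ⟨y, rfl⟩ := List.length_eq_one_iff.1 l2
      have := hσ'.2.trans hr.2.symm
      simp at this
      simp [this]
  · rintro ⟨h1, h2⟩
    refine ⟨h1, fun B' hB' _ => ?_, fun _ => ?_⟩
    · funext π
      rw [marg_apply]
      split_ifs with hr
      · obtain ⟨a, ha, haB'⟩ := Finset.exists_of_ssubset hB'
        rw [← Tsum_del h1 ha π, h2 a ha]
        · simp
        · intro h; apply haB'; rw [← hr.2]; simpa using h
      · rfl
    · obtain ⟨a, ha⟩ : B.Nonempty := Finset.card_pos.1 (by omega)
      rw [← Tsum_nil h1, ← Tsum_del h1 ha [] (by simp), h2 a ha]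
      simp

/-- `L(Γ(B))` in coordinates -/
noncomputable def Kequiv {n : ℕ} (B : Finset (Fin n)) :
    Kspace B ∅ ≃ₗ[ℝ] (rankings n B → ℝ) where
  toFun F := fun σ => F.1 σ.1
  map_add' _ _ := rfl
  map_smul' _ _ := rfl
  invFun g := ⟨fun w => if h : w ∈ rankings n B then g ⟨w, h⟩ else 0, by
    refine ⟨fun w hw => ?_, by simp⟩
    by_contra h
    exact hw (dif_neg (fun h' => h ((mem_rankings _ _).1 h')))⟩
  left_inv F := by
    apply Subtype.ext
    funext w
    by_cases h : w ∈ rankings n B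
    · simp [h]
    · simp only [h, dif_neg, not_false_iff]
      by_contra h'
      exact h ((mem_rankings _ _).2 (F.2.1 w (Ne.symm h')))
  right_inv g := by
    funext σ
    simp

instance Kfin0 {n : ℕ} (B : Finset (Fin n)) : FiniteDimensional ℝ (Kspace B ∅) :=
  (Kequiv B).symm.finiteDimensional

instance Kfin {n : ℕ} (B S : Finset (Fin n)) : FiniteDimensional ℝ (Kspace B S) :=
  Submodule.finiteDimensional_of_le (S₂ := Kspace B ∅) (fun _ hF => ⟨hF.1, by simp⟩)

theorem finrank_K0 {n : ℕ} (B : Finset (Fin n)) :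
    Module.finrank ℝ (Kspace B ∅) = B.card.factorial := by
  rw [(Kequiv B).finrank_eq, Module.finrank_fintype_fun_eq_card, Fintype.card_coe, card_rankings]

theorem K_step {n : ℕ} (B S : Finset (Fin n)) (b : Fin n) (hb : b ∈ B) (hS : b ∉ S) :
    Module.finrank ℝ (Kspace (B.erase b) S) + Module.finrank ℝ (Kspace B (insert b S))
      = Module.finrank ℝ (Kspace B S) := by
  have h := LinearMap.finrank_range_add_finrank_ker ((delL b).domRestrict (Kspace B S))
  have hr : LinearMap.range ((delL b).domRestrict (Kspace B S)) = Kspace (B.erase b) S := by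
    ext G
    constructor
    · rintro ⟨⟨F, hF⟩, rfl⟩
      refine ⟨memL_del hF.1 hb, fun a ha => ?_⟩
      have h0 : del a F = 0 := hF.2 a ha
      funext w
      change del a (del b F) w = 0
      rw [del_comm, h0, del_zero]; rfl
    · rintro ⟨hG1, hG2⟩
      refine ⟨⟨pre b G, ?_, fun a ha => ?_⟩, ?_⟩
      · intro w hw
        cases w with
        | nil => simp [pre] at hw
        | cons c w =>
          by_cases hc : c = b
          · subst hc
            simp only [pre, if_true] at hw
            obtain ⟨h1, h2⟩ := hG1 w hw
            refine ⟨List.nodup_cons.2 ⟨?_, h1⟩, ?_⟩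
            · intro h
              have : c ∈ w.toFinset := by simpa using h
              rw [h2] at this; simp at this
            · rw [List.toFinset_cons, h2, Finset.insert_erase hb]
          · simp [pre, hc] at hw
      · have h0 : del a G = 0 := hG2 a ha
        rw [delL_apply, del_pre_ne (by rintro rfl; exact hS ha), h0]
        funext w
        cases w <;> simp [pre]
      · change del b (pre b G) = G
        apply del_pre_self
        intro v hv
        by_contra h
        have h2 := (hG1 v h).2
        have : b ∈ v.toFinset := by simpa using hv
        rw [h2] at this; simp at this
  have hk : (LinearMap.ker ((delL b).domRestrict (Kspace B S))).map (Kspace B S).subtype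
      = Kspace B (insert b S) := by
    ext F
    constructor
    · rintro ⟨⟨F, hF⟩, hF2, rfl⟩
      refine ⟨hF.1, fun a ha => ?_⟩
      rcases Finset.mem_insert.1 ha with rfl | ha
      · exact hF2
      · exact hF.2 a ha
    · rintro ⟨h1, h2⟩
      exact ⟨⟨F, h1, fun a ha => h2 a (Finset.mem_insert_of_mem ha)⟩,
        h2 b (Finset.mem_insert_self _ _), rfl⟩
  rw [← hr, ← hk, Submodule.finrank_map_subtype_eq]
  exact h

/-- number of permutations of `s + t` letters without fixed point among `s` of them -/
def gnum : ℕ → ℕ → ℤ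
  | 0, t => (t.factorial : ℤ)
  | (s + 1), t => gnum s (t + 1) - gnum s t

theorem finrank_K {n : ℕ} (S : Finset (Fin n)) : ∀ B, S ⊆ B →
    (Module.finrank ℝ (Kspace B S) : ℤ) = gnum S.card (B.card - S.card) := by
  induction S using Finset.induction_on with
  | empty => intro B _; simp [finrank_K0, gnum]
  | insert b S hS ih =>
    intro B hB
    have hb : b ∈ B := hB (Finset.mem_insert_self _ _)
    have hSB : S ⊆ B := fun x hx => hB (Finset.mem_insert_of_mem hx)
    have h1 := ih B hSB
    have h2 := ih (B.erase b) (Finset.subset_erase.2 ⟨hSB, hS⟩)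
    have h3 := K_step B S b hb hS
    have hle := Finset.card_le_card hB
    rw [Finset.card_insert_of_notMem hS] at hle ⊢
    rw [Finset.card_erase_of_mem hb] at h2
    have e1 : B.card - S.card = B.card - (S.card + 1) + 1 := by omega
    have e2 : B.card - 1 - S.card = B.card - (S.card + 1) := by omega
    rw [e1] at h1
    rw [e2] at h2
    rw [gnum, ← h1, ← h2, ← h3]
    push_cast; ring

theorem gnum_one (t : ℕ) : gnum 1 t = t * gnum 0 t := by
  simp only [gnum, Nat.factorial_succ]; push_cast; ring

theorem gnum_rec (s : ℕ) : ∀ t, gnum (s + 2) t = (s + 1) * gnum s (t + 1) + t * gnum (s + 1) t := by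
  induction s with
  | zero =>
    intro t
    have h1 := gnum_one t
    have h2 := gnum_one (t + 1)
    have h3 : gnum 2 t = gnum 1 (t + 1) - gnum 1 t := rfl
    have h4 : gnum 1 t = gnum 0 (t + 1) - gnum 0 t := rfl
    push_cast at *
    rw [h3, h2]
    linear_combination (t : ℤ) * (-h4) - h1
  | succ s ih =>
    intro t
    have h1 := ih t
    have h2 := ih (t + 1)
    have h3 : gnum (s + 3) t = gnum (s + 2) (t + 1) - gnum (s + 2) t := rfl
    have h4 : gnum (s + 2) t = gnum (s + 1) (t + 1) - gnum (s + 1) t := rfl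
    have h5 : gnum (s + 1) (t + 1) = gnum s (t + 2) - gnum s (t + 1) := rfl
    have e : s + 1 + 2 = s + 3 := rfl
    have e' : s + 1 + 1 = s + 2 := rfl
    rw [e, e', h3]
    push_cast at *
    linear_combination h2 - h1 - (s + 1 : ℤ) * h5 - (t : ℤ) * h4

theorem gnum_zero (s : ℕ) : gnum s 0 = numDerangements s := by
  induction s using Nat.twoStepInduction with
  | zero => simp [gnum]
  | one => simp [gnum]
  | more s ih1 ih2 =>
    have h1 := gnum_rec s 0
    have h2 : gnum (s + 1) 0 = gnum s 1 - gnum s 0 := rfl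
    rw [numDerangements_add_two]
    push_cast at *
    rw [← ih1, ← ih2, h1]
    linear_combination (-(s + 1 : ℤ)) * h2

/-- **Dimension of the localization spaces:** `dim H_B = d_{|B|}`, the number of derangements
of a set with `|B|` elements. -/
theorem finrank_Hspace {n : ℕ} (hn : 2 ≤ n) (B : Finset (Fin n)) (hB : 2 ≤ B.card) :
    Module.finrank ℝ (Hspace B) = numDerangements B.card := by
  have h := finrank_K B B (Finset.Subset.refl _)
  rw [Nat.sub_self, gnum_zero] at h
  rw [Hspace_eq B hB]
  exact_mod_cast h
end

section
/- Dimension of the span of indicators of linear extensions: for every integer k with 2 ≤ k ≤ n, let V^k be the linear span in L(Γ([n])) of the indicator functions 1_{S_n(π)} of the sets S_n(π) := {σ ∈ Γ([n]) : π ⊂ σ}, where π ranges over all duplicate-free words on [n] of length k. Then dim V^k = Σ_{j=0}^{k} C(n,j)·d_j (equivalently 1 + Σ_{j=2}^{k} C(n,j)·d_j, since d_1 = 0). In particular V^n = L(Γ([n])) and V^{k-1} ⊆ V^k for 3 ≤ k ≤ n. -/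
open Finset
open scoped List

/-- Indicator function of the set of linear extensions `S_n(π) = {σ ∈ Γ([n]) : π ⊂ σ}`. -/
noncomputable def linextInd {n : ℕ} (π : Word n) : Word n → ℝ :=
  fun σ => if IsRanking Finset.univ σ ∧ π <+ σ then 1 else 0

/-- The space `L(Γ([n]))` (functions supported on full rankings) as a submodule. -/
noncomputable def Lspace (n : ℕ) : Submodule ℝ (Word n → ℝ) where
  carrier := {F | MemL Finset.univ F}
  zero_mem' := by intro w hw; simp at hw
  add_mem' := by
    intro F G hF hG w hw
    by_contra h
    have h1 : F w = 0 := by by_contra h'; exact h (hF w h')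
    have h2 : G w = 0 := by by_contra h'; exact h (hG w h')
    exact hw (by simp [h1, h2])
  smul_mem' := by
    intro c F hF w hw
    by_contra h
    have h1 : F w = 0 := by by_contra h'; exact h (hF w h')
    exact hw (by simp [h1])

/-- `V^k`: the span of the indicators `1_{S_n(π)}` over duplicate-free words `π` of length `k`. -/
noncomputable def Vspace (n k : ℕ) : Submodule ℝ (Word n → ℝ) :=
  Submodule.span ℝ (linextInd '' {π : Word n | π.Nodup ∧ π.length = k})


namespace LinExt
variable {n : ℕ}

def ins (a : Fin n) : List (Fin n) → List (Fin n)
  | [] => [a]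
  | x :: l => if x < a then a :: x :: l else x :: ins a l

def isBad (b : Fin n) : List (Fin n) → Prop
  | [] => False
  | x :: l => (x = b ∧ ∀ y ∈ l.head?, y < b) ∨ (b < x ∧ isBad b l)

def Good (w : List (Fin n)) : Prop := ∀ b, ¬ isBad b w

theorem ins_perm (a : Fin n) (l : List (Fin n)) : ins a l ~ a :: l := by
  induction l with
  | nil => simp [ins]
  | cons x l ih =>
    simp only [ins]
    split_ifs
    · exact List.Perm.refl _
    · exact (List.Perm.cons x ih).trans (List.Perm.swap a x l)

theorem ins_comm (a b : Fin n) (l : List (Fin n)) : ins a (ins b l) = ins b (ins a l) := by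
  induction l with
  | nil => 
    simp only [ins]
    rcases lt_trichotomy a b with h | h | h
    · simp [h, h.not_gt]
    · simp [h]
    · simp [h, h.not_gt]
  | cons x l ih => grind [ins]

theorem isBad_ins (a : Fin n) (l : List (Fin n)) (h : a ∉ l) : isBad a (ins a l) := by
  induction l with
  | nil => simp [ins, isBad]
  | cons x l ih => 
    simp only [ins]
    split_ifs <;> grind [isBad]

theorem head_ins (a : Fin n) (l : List (Fin n)) :
   (ins a l).head? = some a ∨ ((ins a l).head? = l.head? ∧ l ≠ []) := by
  cases l with
  | nil => simp [ins]
  | cons x l => simp only [ins]; split_ifs <;> simp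

theorem isBad_of_ins (a b : Fin n) (hab : a ≠ b) (l : List (Fin n)) (hl : a ∉ l)
    (h : isBad b (ins a l)) : isBad b l := by
  induction l with
  | nil => simp [ins, isBad, hab] at h
  | cons x l ih => 
    simp only [ins] at h
    cases l with
    | nil => grind [ins, isBad]
    | cons y l => 
      split_ifs at h with h1
      · grind [isBad]
      · simp only [isBad] at h ⊢
        rcases h with h | h
        · left
          refine ⟨h.1, ?_⟩
          have := h.2
          simp only [ins] at this
          split_ifs at this <;> simp at this ⊢ <;> grind
        · right
          exact ⟨h.1, ih (by grind) h.2⟩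

theorem isBad_mem (b : Fin n) (l : List (Fin n)) (h : isBad b l) : b ∈ l := by
  induction l with
  | nil => simp [isBad] at h
  | cons x l ih => grind [isBad]

theorem ins_erase_of_isBad (b : Fin n) (l : List (Fin n)) (h : isBad b l) :
    ins b (l.erase b) = l := by
  induction l with
  | nil => simp [isBad] at h
  | cons x l ih => 
    rcases h with h | h
    · obtain ⟨rfl, h⟩ := h
      cases l with
      | nil => simp [ins]
      | cons y l => simp at h; simp [ins, h]
    · have : x ≠ b := h.1.ne'
      rw [List.erase_cons_tail (by simpa using this)]
      simp [ins, h.1.not_gt, ih h.2]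

theorem erase_ins (b : Fin n) (l : List (Fin n)) (h : b ∉ l) : (ins b l).erase b = l := by
  induction l with
  | nil => simp [ins]
  | cons x l ih => 
    simp only [ins]
    split_ifs
    · simp
    · rw [List.erase_cons_tail (by grind), ih (by grind)]

theorem lt_ins (a : Fin n) (l r : List (Fin n)) (hl : a ∉ l) (hr : r ~ a :: l) (hs : l <+ r) :
    r = ins a l ∨ r < ins a l := by
  induction l generalizing r with
  | nil => simp at hr; simp [hr, ins]
  | cons x l ih => 
    cases hs with
    | @cons _ r' y h =>
      have : x :: l = r' := h.eq_of_length (by have := hr.length_eq; simp at this ⊢; omega)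
      subst this
      have hy : y = a := by
        have h2 : [y] ++ (x :: l) ~ [a] ++ (x :: l) := hr
        rw [List.perm_append_right_iff] at h2
        simpa using h2
      subst hy
      simp only [ins]
      split_ifs with h1
      · simp
      · right
        apply List.Lex.rel
        grind
    | @cons_cons _ r' _ h =>
      have h2 : r' ~ a :: l := by
        have := hr.trans (List.Perm.swap x a l)
        simpa using this
      simp only [ins]
      split_ifs with h1
      · right; exact List.Lex.rel h1
      · rcases ih r' (by grind) h2 h with h3 | h3
        · left; rw [h3]
        · right; exact List.Lex.cons h3

/-! counting -/

def insAll (S : Finset (Fin n)) (w : List (Fin n)) : List (Fin n) :=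
  (S.sort (· ≤ ·)).foldr ins w

instance : LeftCommutative (ins (n := n)) := ⟨fun a b l => ins_comm a b l⟩

theorem insAll_insert (S : Finset (Fin n)) (a : Fin n) (ha : a ∉ S) (w : List (Fin n)) :
    insAll (insert a S) w = ins a (insAll S w) := by
  unfold insAll
  have : (insert a S).sort (· ≤ ·) ~ a :: S.sort (· ≤ ·) := by
    rw [List.perm_ext_iff_of_nodup] <;> simp [ha]
  rw [this.foldr_eq]; rfl

theorem insAll_perm (S : Finset (Fin n)) (w : List (Fin n)) :
    insAll S w ~ S.sort (· ≤ ·) ++ w := by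
  unfold insAll
  induction S.sort (· ≤ ·) with
  | nil => simp
  | cons a l ih => 
    simp only [List.foldr_cons, List.cons_append]
    exact (ins_perm _ _).trans (ih.cons a)

theorem isBad_of_insAll (S : Finset (Fin n)) (w : List (Fin n)) (hd : Disjoint S w.toFinset)
    (b : Fin n) (hb : b ∉ S) (h : isBad b (insAll S w)) : isBad b w := by
  induction S using Finset.induction_on with
  | empty => simpa [insAll] using h
  | insert a S ha ih => 
    rw [insAll_insert _ _ ha] at h
    have h1 : a ∉ w ∧ Disjoint S w.toFinset := by
      simpa [Finset.disjoint_insert_left] using hd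
    apply ih h1.2 (by grind)
    refine isBad_of_ins a b (by grind) _ ?_ h
    rw [(insAll_perm S w).mem_iff]
    simp [ha, h1.1]

theorem isBad_insAll (S : Finset (Fin n)) (w : List (Fin n)) (hd : Disjoint S w.toFinset)
    (b : Fin n) (hb : b ∈ S) : isBad b (insAll S w) := by
  obtain ⟨T, hT, rfl⟩ : ∃ T, b ∉ T ∧ S = insert b T := ⟨S.erase b, by simp, by simp [hb]⟩
  rw [insAll_insert _ _ hT]
  apply isBad_ins
  rw [(insAll_perm _ w).mem_iff]
  have h1 : b ∉ w ∧ Disjoint T w.toFinset := by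
    simpa [Finset.disjoint_insert_left] using hd
  simp [hT, h1.1]

theorem insAll_inj (S : Finset (Fin n)) (w w' : List (Fin n)) (hd : Disjoint S w.toFinset)
    (hd' : Disjoint S w'.toFinset) (h : insAll S w = insAll S w') : w = w' := by
  induction S using Finset.induction_on with
  | empty => simpa [insAll] using h
  | insert a S ha ih => 
    rw [insAll_insert _ _ ha, insAll_insert _ _ ha] at h
    have h1 : a ∉ w ∧ Disjoint S w.toFinset := by
      simpa [Finset.disjoint_insert_left] using hd
    have h2 : a ∉ w' ∧ Disjoint S w'.toFinset := by
      simpa [Finset.disjoint_insert_left] using hd'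
    apply ih h1.2 h2.2
    have := congrArg (List.erase · a) h
    rwa [erase_ins, erase_ins] at this
    · rw [(insAll_perm S w').mem_iff]
      simp [ha, h2.1]
    · rw [(insAll_perm S w).mem_iff]
      simp [ha, h1.1]

theorem exists_good (w : List (Fin n)) (hw : w.Nodup) :
    ∃ w0 : List (Fin n), Good w0 ∧ w0.Nodup ∧ w0.toFinset ⊆ w.toFinset ∧
      insAll (w.toFinset \ w0.toFinset) w0 = w := by
  induction hm : w.length using Nat.strong_induction_on generalizing w with
  | _ m ih =>
    by_cases hg : Good w
    · exact ⟨w, hg, hw, subset_rfl, by simp [insAll]⟩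
    · simp only [Good, not_forall, not_not] at hg
      obtain ⟨b, hb⟩ := hg
      have hbm := isBad_mem _ _ hb
      obtain ⟨w0, h1, h2, h3, h4⟩ := ih (w.erase b).length
        (by rw [List.length_erase_of_mem hbm]; have := List.length_pos_of_mem hbm; omega)
        (w.erase b) (hw.erase b) rfl
      have hmem : ∀ x, x ∈ w.erase b ↔ x ≠ b ∧ x ∈ w := fun x => hw.mem_erase_iff
      refine ⟨w0, h1, h2, ?_, ?_⟩
      · intro x hx
        have := h3 hx
        simp [hmem] at this
        simp [this.2]
      · have hbw0 : b ∉ w0 := fun hx => by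
          have := h3 (by simpa using hx : b ∈ w0.toFinset)
          simp [hmem] at this
        have : w.toFinset \ w0.toFinset = insert b ((w.erase b).toFinset \ w0.toFinset) := by
          ext x
          simp only [Finset.mem_sdiff, List.mem_toFinset, Finset.mem_insert, hmem]
          by_cases hx : x = b
          · subst hx; simp [hbm, hbw0]
          · simp [hx]
        rw [this, insAll_insert _ _ (by simp [hmem]), h4, ins_erase_of_isBad _ _ hb]

theorem mem_rankings (A : Finset (Fin n)) (w : Word n) :
    w ∈ rankings n A ↔ IsRanking A w := by
  unfold rankings IsRanking
  rw [List.mem_toFinset, List.mem_permutations]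
  constructor
  · intro h
    refine ⟨h.nodup_iff.2 A.nodup_toList, ?_⟩
    rw [List.toFinset_eq_of_perm _ _ h]; simp
  · rintro ⟨h, rfl⟩
    rw [List.perm_ext_iff_of_nodup h (Finset.nodup_toList _)]
    simp

theorem card_rankings (A : Finset (Fin n)) : (rankings n A).card = A.card.factorial := by
  unfold rankings
  rw [List.toFinset_card_of_nodup (List.nodup_permutations _ A.nodup_toList)]
  simp [List.length_permutations]

open Classical in
noncomputable def goods (A : Finset (Fin n)) : Finset (Word n) := (rankings n A).filter Good

theorem mem_goods (A : Finset (Fin n)) (w : Word n) :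
    w ∈ goods A ↔ (w.Nodup ∧ w.toFinset = A) ∧ Good w := by
  simp [goods, mem_rankings, IsRanking]

theorem sum_goods (A : Finset (Fin n)) :
    ∑ C ∈ A.powerset, (goods C).card = A.card.factorial := by
  rw [← card_rankings, ← Finset.card_sigma]
  refine Finset.card_bij (fun p _ => insAll (A \ p.1) p.2) ?_ ?_ ?_
  · rintro ⟨C, w⟩ h
    simp only [Finset.mem_sigma, Finset.mem_powerset, mem_goods] at h
    obtain ⟨hC, ⟨hw, rfl⟩, hg⟩ := h
    rw [mem_rankings]
    have hp := insAll_perm (A \ w.toFinset) w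
    refine ⟨hp.nodup_iff.2 ?_, ?_⟩
    · rw [List.nodup_append']
      refine ⟨by simp, hw, ?_⟩
      intro x hx; simp at hx; simp [hx.2]
    · rw [List.toFinset_eq_of_perm _ _ hp]
      ext x
      simp
      have := @hC x
      simp at this
      tauto
  · rintro ⟨C, w⟩ h ⟨C', w'⟩ h' heq
    simp only [Finset.mem_sigma, Finset.mem_powerset, mem_goods] at h h' heq
    obtain ⟨hC, ⟨hw, rfl⟩, hg⟩ := h
    obtain ⟨hC', ⟨hw', rfl⟩, hg'⟩ := h'
    have hd : ∀ u : List (Fin n), Disjoint (A \ u.toFinset) u.toFinset := fun u =>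
      Finset.sdiff_disjoint
    have key : ∀ u v : List (Fin n), u.toFinset ⊆ A → Good u →
        insAll (A \ u.toFinset) u = insAll (A \ v.toFinset) v → u.toFinset ⊆ v.toFinset := by
      intro u v hu hgu h x hx
      by_contra hxv
      apply hgu x
      apply isBad_of_insAll _ _ (hd u) x (by simp at hx; simp [hx])
      rw [h]
      exact isBad_insAll _ _ (hd v) x (by simp at hxv; simp [hxv, hu hx])
    have he : w.toFinset = w'.toFinset :=
      Finset.Subset.antisymm (key w w' hC hg heq) (key w' w hC' hg' heq.symm)
    have : w = w' := by
      rw [← he] at heq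
      exact insAll_inj _ _ _ (hd w) (by rw [← he]; exact hd w) heq
    subst this; rfl
  · intro w hw
    rw [mem_rankings] at hw
    obtain ⟨hw, rfl⟩ := hw
    obtain ⟨w0, h1, h2, h3, h4⟩ := exists_good w hw
    exact ⟨⟨w0.toFinset, w0⟩, by simp [mem_goods, h1, h2]; simpa using h3, h4⟩

theorem sum_derangements (A : Finset (Fin n)) :
    ∑ C ∈ A.powerset, numDerangements C.card = A.card.factorial := by
  rw [Finset.sum_powerset_apply_card (fun j => numDerangements j) (x := A)]
  generalize A.card = m
  have h1 : Fintype.card (Equiv.Perm (Fin m)) = m.factorial := by simp [Fintype.card_perm]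
  rw [← h1, ← Finset.card_univ]
  rw [Finset.card_eq_sum_card_fiberwise (f := fun σ : Equiv.Perm (Fin m) => σ.support)
    (t := (Finset.univ : Finset (Fin m)).powerset) (by intro; simp)]
  have h2 : ∀ C : Finset (Fin m), (Finset.univ.filter
      fun σ : Equiv.Perm (Fin m) => σ.support = C).card = numDerangements C.card := by
    intro C
    have e := derangements.subtypeEquiv (fun a : Fin m => a ∈ C)
    have h3 := Fintype.card_congr e
    rw [card_derangements_eq_numDerangements] at h3
    simp only [Fintype.card_coe] at h3
    rw [h3, Fintype.card_subtype]
    congr 1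
    ext σ
    simp only [Finset.mem_filter, Finset.mem_univ, true_and, Finset.ext_iff,
      Equiv.Perm.mem_support, Function.mem_fixedPoints, Function.IsFixedPt]
    refine forall_congr' fun a => ?_
    tauto
  simp only [h2]
  rw [Finset.sum_powerset_apply_card (fun j => numDerangements j) (x := Finset.univ)]
  simp

theorem card_goods (A : Finset (Fin n)) : (goods A).card = numDerangements A.card := by
  induction A using Finset.strongInduction with
  | H A ih =>
    have h1 := sum_goods A
    rw [← sum_derangements A] at h1
    rw [← Finset.sum_erase_add _ _ (Finset.mem_powerset_self A),
      ← Finset.sum_erase_add _ _ (Finset.mem_powerset_self A)] at h1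
    have : ∑ x ∈ A.powerset.erase A, (goods x).card =
        ∑ x ∈ A.powerset.erase A, numDerangements x.card := by
      apply Finset.sum_congr rfl
      intro C hC
      rw [Finset.mem_erase, Finset.mem_powerset] at hC
      exact ih C (hC.2.ssubset_of_ne hC.1)
    omega

/-! linear algebra -/

theorem sub_full_iff (σ ρ : Word n) (hσ : σ.Nodup) (B : Finset (Fin n)) (hB : B ⊆ σ.toFinset)
    (hρ : IsRanking B ρ) : ρ <+ σ ↔ ρ = restrictWord σ B := by
  constructor
  · intro h
    have h1 : ρ <+ restrictWord σ B := by
      have := h.filter (fun a => decide (a ∈ B))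
      rwa [List.filter_eq_self.2] at this
      intro a ha
      simp [← hρ.2, ha]
    refine h1.eq_of_length ?_
    rw [← List.toFinset_card_of_nodup hρ.1, hρ.2,
      ← List.toFinset_card_of_nodup (l := restrictWord σ B) (hσ.filter _)]
    congr 1
    ext x
    have := @hB x
    simp [restrictWord] at this ⊢
    tauto
  · rintro rfl; exact List.filter_sublist

theorem isRanking_restrict (σ : Word n) (hσ : σ.Nodup) (B : Finset (Fin n)) (hB : B ⊆ σ.toFinset) :
    IsRanking B (restrictWord σ B) := by
  refine ⟨hσ.filter _, ?_⟩
  ext x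
  have := @hB x
  simp [restrictWord] at this ⊢
  tauto

theorem linextInd_eq_sum (π : Word n) (B : Finset (Fin n)) (hB : π.toFinset ⊆ B) :
    linextInd π = ∑ ρ ∈ (rankings n B).filter (fun ρ => π <+ ρ), linextInd ρ := by
  funext σ
  rw [Finset.sum_apply]
  unfold linextInd
  by_cases hσ : IsRanking Finset.univ σ
  · simp only [hσ, true_and]
    have hBσ : B ⊆ σ.toFinset := by rw [hσ.2]; simp
    have : ∀ ρ ∈ (rankings n B).filter (fun ρ => π <+ ρ), (if ρ <+ σ then (1:ℝ) else 0) =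
        if ρ = restrictWord σ B then 1 else 0 := by
      intro ρ hρ
      rw [Finset.mem_filter, mem_rankings] at hρ
      simp only [sub_full_iff σ ρ hσ.1 B hBσ hρ.1]
    rw [Finset.sum_congr rfl this, Finset.sum_ite_eq']
    congr 1
    simp only [Finset.mem_filter, mem_rankings, isRanking_restrict σ hσ.1 B hBσ, true_and]
    apply propext
    constructor
    · intro h
      have := h.filter (fun a => decide (a ∈ B))
      rwa [List.filter_eq_self.2] at this
      intro a ha
      simpa using hB (by simpa using ha)
    · intro h; exact h.trans List.filter_sublist
  · simp [hσ]

theorem exists_card (A : Finset (Fin n)) (k : ℕ) (h1 : A.card ≤ k) (h2 : k ≤ n) :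
    ∃ B, A ⊆ B ∧ B.card = k := by
  obtain ⟨B, hB, -, h⟩ := Finset.exists_subsuperset_card_eq (Finset.subset_univ A) h1 (by simpa using h2)
  exact ⟨B, hB, h⟩

theorem linextInd_mem (π : Word n) (hπ : π.Nodup) (k : ℕ) (hk : π.length ≤ k) (hkn : k ≤ n) :
    linextInd π ∈ Vspace n k := by
  obtain ⟨B, hB, hc⟩ := exists_card π.toFinset k
    (by rwa [List.toFinset_card_of_nodup hπ]) hkn
  rw [linextInd_eq_sum π B hB]
  refine Submodule.sum_mem _ fun ρ hρ => Submodule.subset_span ⟨ρ, ?_, rfl⟩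
  rw [Finset.mem_filter, mem_rankings] at hρ
  refine ⟨hρ.1.1, ?_⟩
  rw [← List.toFinset_card_of_nodup hρ.1.1, hρ.1.2, hc]

def Gset (n k : ℕ) : Set (Word n) := {w | w.Nodup ∧ Good w ∧ w.length ≤ k}

theorem mem_span_good (m : ℕ) : ∀ π : Word n, π.Nodup → π.length = m →
    linextInd π ∈ Submodule.span ℝ (linextInd '' Gset n m) := by
  induction m using Nat.strong_induction_on with
  | _ m ih =>
  intro π hπ hm
  induction hc : ((rankings n π.toFinset).filter (fun ρ => ρ < π)).card
    using Nat.strong_induction_on generalizing π with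
  | _ c ihc =>
    by_cases hg : Good π
    · exact Submodule.subset_span ⟨π, ⟨hπ, hg, hm.le⟩, rfl⟩
    · simp only [Good, not_forall, not_not] at hg
      obtain ⟨b, hb⟩ := hg
      have hbm := isBad_mem _ _ hb
      have hnb : b ∉ π.erase b := by simp [hπ.mem_erase_iff]
      have hlen : (π.erase b).length < m := by
        rw [List.length_erase_of_mem hbm]; have := List.length_pos_of_mem hbm; omega
      have hsum := linextInd_eq_sum (π.erase b) π.toFinset (by
        intro x hx
        simp [hπ.mem_erase_iff] at hx
        simp [hx.2])
      have hmem : π ∈ (rankings n π.toFinset).filter (fun ρ => π.erase b <+ ρ) := by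
        simp [mem_rankings, IsRanking, hπ, List.erase_sublist]
      rw [← Finset.sum_erase_add _ _ hmem] at hsum
      rw [← sub_eq_iff_eq_add'] at hsum
      rw [← hsum]
      refine Submodule.sub_mem _ ?_ (Submodule.sum_mem _ ?_)
      · refine Submodule.span_mono (Set.image_mono ?_) (ih _ hlen _ (hπ.erase b) rfl)
        exact fun w hw => ⟨hw.1, hw.2.1, hw.2.2.trans hlen.le⟩
      · intro ρ hρ
        rw [Finset.mem_erase, Finset.mem_filter, mem_rankings] at hρ
        obtain ⟨hne, ⟨hρn, hρf⟩, hsub⟩ := hρ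
        have hperm : ρ ~ π := (List.perm_ext_iff_of_nodup hρn hπ).2 fun a => by
          rw [← List.mem_toFinset, hρf, List.mem_toFinset]
        have hlt : ρ < π := by
          have := lt_ins b (π.erase b) ρ hnb (hperm.trans (List.perm_cons_erase hbm)) hsub
          rw [ins_erase_of_isBad _ _ hb] at this
          exact this.resolve_left hne
        refine ihc _ ?_ ρ hρn (by rw [hperm.length_eq, hm]) rfl
        rw [← hc, hρf]
        apply Finset.card_lt_card
        rw [Finset.ssubset_iff_of_subset]
        · exact ⟨ρ, by simp [mem_rankings, IsRanking, hρn, hρf, hlt], by simp⟩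
        · intro τ hτ
          rw [Finset.mem_filter] at hτ ⊢
          exact ⟨hτ.1, hτ.2.trans hlt⟩

theorem Vspace_eq (k : ℕ) (hk : k ≤ n) :
    Vspace n k = Submodule.span ℝ (linextInd '' Gset n k) := by
  apply le_antisymm
  · refine Submodule.span_le.2 ?_
    rintro _ ⟨π, ⟨h1, h2⟩, rfl⟩
    exact mem_span_good k π h1 h2
  · refine Submodule.span_le.2 ?_
    rintro _ ⟨π, ⟨h1, -, h2⟩, rfl⟩
    exact linextInd_mem π h1 k h2 hk

noncomputable def Gfin (n k : ℕ) : Finset (Word n) :=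
  (Finset.univ.filter (fun C : Finset (Fin n) => C.card ≤ k)).biUnion goods

theorem coe_Gfin (k : ℕ) : (Gfin n k : Set (Word n)) = Gset n k := by
  ext w
  simp only [Gfin, Finset.coe_biUnion, Set.mem_iUnion, Finset.mem_coe, mem_goods, Gset,
    Set.mem_ofPred_eq, Finset.mem_filter, Finset.mem_univ, true_and]
  constructor
  · rintro ⟨C, hC, ⟨h1, rfl⟩, h2⟩
    exact ⟨h1, h2, by rwa [List.toFinset_card_of_nodup h1] at hC⟩
  · rintro ⟨h1, h2, h3⟩
    exact ⟨w.toFinset, by rwa [List.toFinset_card_of_nodup h1], ⟨h1, rfl⟩, h2⟩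

theorem card_Gfin (k : ℕ) (hk : k ≤ n) :
    (Gfin n k).card = ∑ j ∈ Finset.range (k + 1), Nat.choose n j * numDerangements j := by
  unfold Gfin
  rw [Finset.card_biUnion]
  · simp only [card_goods]
    have := Finset.sum_powerset_apply_card
      (fun j => if j ≤ k then numDerangements j else 0) (x := (Finset.univ : Finset (Fin n)))
    rw [Finset.powerset_univ, ← Finset.sum_filter] at this
    rw [this]
    simp only [Finset.card_univ, Fintype.card_fin, smul_eq_mul]
    symm
    apply Finset.sum_subset_zero_on_sdiff
    · intro j; simp; omega
    · intro j hj; simp at hj; rw [if_neg (by omega)]; simp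
    · intro j hj
      simp at hj
      rw [if_pos (by omega)]
  · intro C _ D _ hCD
    rw [Function.onFun, Finset.disjoint_left]
    intro w h1 h2
    rw [mem_goods] at h1 h2
    exact hCD (h1.1.2.symm.trans h2.1.2)

theorem linextInd_full (ρ : Word n) (hρ : IsRanking Finset.univ ρ) :
    linextInd ρ = Pi.single ρ 1 := by
  funext σ
  unfold linextInd
  rw [Pi.single_apply]
  congr 1
  apply propext
  constructor
  · rintro ⟨hσ, h⟩
    refine (h.eq_of_length ?_).symm
    rw [← List.toFinset_card_of_nodup hρ.1, ← List.toFinset_card_of_nodup hσ.1, hρ.2, hσ.2]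
  · rintro rfl; exact ⟨hρ, List.Sublist.refl _⟩

theorem full_iff (π : Word n) : (π.Nodup ∧ π.length = n) ↔ IsRanking Finset.univ π := by
  constructor
  · rintro ⟨h1, h2⟩
    refine ⟨h1, ?_⟩
    rw [← Finset.card_eq_iff_eq_univ, List.toFinset_card_of_nodup h1, h2]; simp
  · rintro ⟨h1, h2⟩
    refine ⟨h1, ?_⟩
    rw [← List.toFinset_card_of_nodup h1, h2]; simp

theorem Vspace_full : Vspace n n = Lspace n := by
  apply le_antisymm
  · refine Submodule.span_le.2 ?_
    rintro _ ⟨π, -, rfl⟩ σ hσ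
    by_contra h
    exact hσ (by simp [linextInd, h])
  · intro F hF
    have : F = ∑ ρ ∈ rankings n Finset.univ, F ρ • linextInd ρ := by
      funext σ
      rw [Finset.sum_apply]
      have h1 : ∀ ρ ∈ rankings n Finset.univ, (F ρ • linextInd ρ) σ = if σ = ρ then F ρ else 0 := by
        intro ρ hρ
        rw [mem_rankings] at hρ
        simp [linextInd_full ρ hρ, Pi.single_apply]
      rw [Finset.sum_congr rfl h1, Finset.sum_ite_eq]
      split_ifs with h
      · rfl
      · by_contra h2
        exact h ((mem_rankings _ _).2 (hF σ h2))
    rw [this]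
    refine Submodule.sum_mem _ fun ρ hρ => Submodule.smul_mem _ _ (Submodule.subset_span ⟨ρ, ?_, rfl⟩)
    exact (full_iff ρ).2 ((mem_rankings _ _).1 hρ)

theorem finrank_full : Module.finrank ℝ (Vspace n n) = n.factorial := by
  have h1 : LinearIndependent ℝ (fun ρ : rankings n Finset.univ => linextInd ρ.1) := by
    rw [Fintype.linearIndependent_iff]
    intro g hg ρ
    have := congrFun hg ρ.1
    rw [Finset.sum_apply, Finset.sum_eq_single ρ] at this
    · simpa [linextInd_full ρ.1 ((mem_rankings _ _).1 ρ.2)] using this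
    · intro τ _ hτ
      have : ρ.1 ≠ τ.1 := fun h => hτ (Subtype.ext h.symm)
      simp [linextInd_full τ.1 ((mem_rankings _ _).1 τ.2), Pi.single_apply, this]
    · simp
  have h2 := finrank_span_eq_card h1
  rw [Fintype.card_coe, card_rankings] at h2
  simp only [Finset.card_univ, Fintype.card_fin] at h2
  rw [← h2]
  unfold Vspace
  have hr : linextInd '' {π : Word n | π.Nodup ∧ π.length = n} =
      Set.range (fun ρ : rankings n Finset.univ => linextInd ρ.1) := by
    ext F
    simp only [Set.mem_image, Set.mem_ofPred_eq, full_iff, Set.mem_range, Subtype.exists,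
      mem_rankings, exists_prop]
  rw [hr]

theorem indep : LinearIndependent ℝ (fun w : Gfin n n => linextInd w.1) := by
  rw [linearIndependent_iff_card_eq_finrank_span]
  have hr : Set.range (fun w : Gfin n n => linextInd w.1) = linextInd '' Gset n n := by
    rw [← coe_Gfin]
    ext F; simp
  rw [Set.finrank, hr, ← Vspace_eq n le_rfl, finrank_full, Fintype.card_coe, card_Gfin n le_rfl]
  have := sum_derangements (Finset.univ : Finset (Fin n))
  rw [Finset.sum_powerset_apply_card (fun j => numDerangements j)] at this
  simpa using this

theorem finrank_V (k : ℕ) (hk : k ≤ n) : Module.finrank ℝ (Vspace n k) =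
    ∑ j ∈ Finset.range (k + 1), Nat.choose n j * numDerangements j := by
  have hsub : Gfin n k ⊆ Gfin n n := by
    rw [← Finset.coe_subset, coe_Gfin, coe_Gfin]
    exact fun w hw => ⟨hw.1, hw.2.1, hw.2.2.trans hk⟩
  have h1 : LinearIndependent ℝ (fun w : Gfin n k => linextInd w.1) :=
    indep.comp (fun w : Gfin n k => (⟨w.1, hsub w.2⟩ : Gfin n n)) (by
      intro a b h
      exact Subtype.ext (congrArg (fun x : Gfin n n => x.1) h))
  have h2 := finrank_span_eq_card h1
  have hr : Set.range (fun w : Gfin n k => linextInd w.1) = linextInd '' Gset n k := by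
    rw [← coe_Gfin]
    ext F; simp
  rw [Fintype.card_coe, card_Gfin k hk, hr, ← Vspace_eq k hk] at h2
  exact h2

end LinExt

/-- **Dimension of the span of indicators of linear extensions:**
`dim V^k = Σ_{j=0}^{k} C(n,j)·d_j`; moreover `V^n = L(Γ([n]))` and `V^{k-1} ⊆ V^k`. -/
theorem finrank_Vspace {n : ℕ} (hn : 2 ≤ n) (k : ℕ) (hk2 : 2 ≤ k) (hkn : k ≤ n) :
    Module.finrank ℝ (Vspace n k) =
        ∑ j ∈ Finset.range (k + 1), Nat.choose n j * numDerangements j ∧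
      Vspace n n = Lspace n ∧
      (3 ≤ k → Vspace n (k - 1) ≤ Vspace n k) := by
  refine ⟨LinExt.finrank_V k hkn, LinExt.Vspace_full, fun _ => ?_⟩
  refine Submodule.span_le.2 ?_
  rintro _ ⟨π, ⟨h1, h2⟩, rfl⟩
  exact LinExt.linextInd_mem π h1 k (by omega) hkn
end
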